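/- arXiv:2303.13185 — 3 statements merged into one kernel-verified Lean document; each statement's English description precedes it below -/
import Mathlib

section
/- There exists a constant c such that for every natural number n, every binary string x of length n, and every finite nonempty set S of binary strings with x ∈ S, C(S) ≤ n, and |S| ≤ 2^n, there exists a finite nonempty set S' of binary strings with x ∈ S', C(S') ≤ C(S) + c·log(n+2), and δ(x|S') ≤ d(x|S) + c·log(n+2). (Vereshchagin–Vitányi: every good statistical model in the randomness-deficiency sense can be converted into one of essentially the same complexity that is good in the optimality-deficiency sense.) -/
open scoped Classical

/-- Binary strings: finite sequences over `{0,1}`. -/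
abbrev BStr := List Bool

/-- Complexity of `x` with respect to the description method `D`:
the minimal length of a `p` with `D(p) = x`, as an extended natural
(`⊤` if no such `p` exists). -/
noncomputable def Cw (D : BStr →. BStr) (x : BStr) : ℕ∞ :=
  ⨅ (p : BStr) (_ : x ∈ D p), (p.length : ℕ∞)

/-- A description method is optimal if it is partial computable and gives
complexity at most that of any other partial computable description method,
up to an additive constant. -/
def OptimalDM (D : BStr →. BStr) : Prop :=
  Partrec D ∧ ∀ D' : BStr →. BStr, Partrec D' →
    ∃ c : ℕ, ∀ x : BStr, Cw D x ≤ Cw D' x + (c : ℕ∞)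

/-- Plain Kolmogorov complexity (finite value) w.r.t. a description method. -/
noncomputable def C (D : BStr →. BStr) (x : BStr) : ℕ := (Cw D x).toNat

/-- Conditional complexity of `x` given `y` w.r.t. the conditional
description method `E`. -/
noncomputable def CwCond (E : BStr → BStr →. BStr) (x y : BStr) : ℕ∞ :=
  ⨅ (p : BStr) (_ : x ∈ E p y), (p.length : ℕ∞)

/-- Optimal conditional description method. -/
def OptimalCDM (E : BStr → BStr →. BStr) : Prop :=
  Partrec₂ E ∧ ∀ E' : BStr → BStr →. BStr, Partrec₂ E' →
    ∃ c : ℕ, ∀ x y : BStr, CwCond E x y ≤ CwCond E' x y + (c : ℕ∞)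

/-- Conditional Kolmogorov complexity (finite value). -/
noncomputable def Ccond (E : BStr → BStr →. BStr) (x y : BStr) : ℕ :=
  (CwCond E x y).toNat

/-- `enc` is a computable injective encoding of finite sets of binary strings
as binary strings (computability is expressed on the level of lists of
elements, since every finite set is the set of members of a list). -/
def SetEncoding (enc : Finset BStr → BStr) : Prop :=
  Function.Injective enc ∧ Computable (fun l : List BStr => enc l.toFinset)

/-- A computable step-counting semantics for the description method `D`:
`ev t p` is the output of `D` on program `p` within `t` computation steps
(`none` if the computation has not converged within `t` steps). -/
structure TimedDM (D : BStr →. BStr) where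
  ev : ℕ → BStr → Option BStr
  computable : Computable₂ ev
  mono : ∀ {t t' : ℕ} {p y : BStr}, t ≤ t' → ev t p = some y → ev t' p = some y
  spec : ∀ p y : BStr, y ∈ D p ↔ ∃ t : ℕ, ev t p = some y

/-- Time-bounded complexity `C^t(x)`: the minimal length of a program
producing `x` within `t` steps (`⊤` if there is none). -/
noncomputable def Cwt (ev : ℕ → BStr → Option BStr) (t : ℕ) (x : BStr) : ℕ∞ :=
  ⨅ (p : BStr) (_ : ev t p = some x), (p.length : ℕ∞)

/-- `B D k`: the largest natural number whose binary representation has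
complexity at most `k` (naturals are identified with their binary
representations via `Nat.bits`). -/
noncomputable def B (D : BStr →. BStr) (k : ℕ) : ℕ :=
  sSup {m : ℕ | Cw D (Nat.bits m) ≤ (k : ℕ∞)}

/-- Kolmogorov's `(α,β)`-stochasticity: `x` belongs to a finite set `S` of
complexity at most `α` in which it is random up to `β`. -/
def Stochastic (D : BStr →. BStr) (enc : Finset BStr → BStr)
    (α β : ℕ) (x : BStr) : Prop :=
  ∃ S : Finset BStr, x ∈ S ∧ C D (enc S) ≤ α ∧
    Real.logb 2 S.card - β ≤ (C D x : ℝ)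

/-- The binary entropy function (with the convention `H(0) = H(1) = 0`,
which holds automatically since `logb 2 0 = 0` in Mathlib). -/
noncomputable def binH (p : ℝ) : ℝ :=
  -(p * Real.logb 2 p) - (1 - p) * Real.logb 2 (1 - p)


section Helpers

/-- Values of `M` in the order (newest first) in which their count hits `h`. -/
def hv {β : Type} [DecidableEq β] (h : ℕ) : List β → List β
  | [] => []
  | y :: M => if (M.filter (fun z => decide (z = y))).length + 1 = h then y :: hv h M else hv h M

theorem filt_count {β : Type} [DecidableEq β] (y : β) (M : List β) :
    (M.filter (fun z => decide (z = y))).length = M.count y := by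
  rw [List.count_eq_length_filter]
  congr 1

theorem mem_hv {β : Type} [DecidableEq β] {h : ℕ} (hh : 1 ≤ h) (y : β) (M : List β) :
    y ∈ hv h M ↔ h ≤ M.count y := by
  induction M with
  | nil => simp [hv]; omega
  | cons z M ih =>
    rw [hv, filt_count]
    by_cases hz : z = y
    · subst hz
      simp only [List.count_cons_self]
      split_ifs with h1
      · simp; omega
      · rw [ih]; omega
    · rw [List.count_cons_of_ne hz]
      split_ifs with h1
      · simp only [List.mem_cons, ih]
        constructor
        · rintro (h2 | h2)
          · exact absurd h2.symm hz
          · exact h2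
        · exact Or.inr
      · exact ih

theorem mem_hv' {β : Type} [DecidableEq β] {h : ℕ} (hh : 1 ≤ h) (y : β) (M : List β) :
    y ∈ hv h M ↔ h ≤ (M.filter (fun z => decide (z = y))).length := by
  rw [mem_hv hh, filt_count]

theorem nodup_hv {β : Type} [DecidableEq β] {h : ℕ} (hh : 1 ≤ h) (M : List β) :
    (hv h M).Nodup := by
  induction M with
  | nil => simp [hv]
  | cons z M ih =>
    rw [hv, filt_count]
    split_ifs with h1
    · refine List.nodup_cons.2 ⟨?_, ih⟩
      rw [mem_hv hh]; omega
    · exact ih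

theorem hv_suffix {β : Type} [DecidableEq β] (h : ℕ) {M M' : List β} (hs : M <:+ M') :
    hv h M <:+ hv h M' := by
  obtain ⟨t, rfl⟩ := hs
  induction t with
  | nil => simp
  | cons z t ih =>
    simp only [List.cons_append, hv]
    split_ifs
    · exact ih.trans (List.suffix_cons _ _)
    · exact ih

theorem hv_length {β : Type} [DecidableEq β] {h : ℕ} (hh : 1 ≤ h) (M : List β) :
    (hv h M).length * h ≤ M.length := by
  have h1 : (hv h M).toFinset.card = (hv h M).length := List.toFinset_card_of_nodup (nodup_hv hh M)
  rw [← h1]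
  have h2 : (hv h M).toFinset ⊆ M.toFinset := by
    intro y hy
    rw [List.mem_toFinset, mem_hv hh] at hy
    rw [List.mem_toFinset]
    exact List.count_pos_iff.1 (by omega)
  calc (hv h M).toFinset.card * h = ∑ _y ∈ (hv h M).toFinset, h := by simp
    _ ≤ ∑ y ∈ (hv h M).toFinset, M.count y := Finset.sum_le_sum (by
        intro y hy
        rwa [List.mem_toFinset, mem_hv hh] at hy)
    _ ≤ ∑ y ∈ M.toFinset, M.count y := Finset.sum_le_sum_of_subset h2
    _ = M.length := List.sum_toFinset_count_eq_length M

theorem primrec_hv {β : Type} [DecidableEq β] [Primcodable β] :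
    Primrec₂ (hv : ℕ → List β → List β) := by
  have hfil : Primrec₂ (fun (L : List β) (b : β) => L.filter (fun a => decide (a = b))) :=
    PrimrecRel.listFilter Primrec.eq
  have : Primrec (fun p : ℕ × List β =>
      (List.rec [] (fun y M ih => if (M.filter (fun z => decide (z = y))).length + 1 = p.1
        then y :: ih else ih) p.2 : List β)) := by
    refine Primrec.list_rec (h := fun (p : ℕ × List β) (q : β × List β × List β) =>
      if (q.2.1.filter (fun z => decide (z = q.1))).length + 1 = p.1 then q.1 :: q.2.2 else q.2.2)
      Primrec.snd (Primrec.const []) ?_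
    refine Primrec.ite ?_ ?_ ?_
    · refine Primrec.eq.comp (Primrec.succ.comp (Primrec.list_length.comp (hfil.comp ?_ ?_))) ?_
      · exact Primrec.fst.comp (Primrec.snd.comp Primrec.snd)
      · exact Primrec.fst.comp Primrec.snd
      · exact Primrec.fst.comp Primrec.fst
    · exact Primrec.list_cons.comp (Primrec.fst.comp Primrec.snd)
        (Primrec.snd.comp (Primrec.snd.comp Primrec.snd))
    · exact Primrec.snd.comp (Primrec.snd.comp Primrec.snd)
  refine this.of_eq ?_
  rintro ⟨h, M⟩
  simp only
  induction M with
  | nil => rfl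
  | cons y M ih => simp only [hv]; rw [ih]

/-- Time-bounded evaluation of a partial computable function. -/
theorem exists_ev {α β : Type} [Primcodable α] [Primcodable β] (f : α →. β) (hf : Partrec f) :
    ∃ ev : ℕ → α → Option β, Computable₂ ev ∧
      (∀ t t' a b, t ≤ t' → ev t a = some b → ev t' a = some b) ∧
      (∀ a b, b ∈ f a ↔ ∃ t, ev t a = some b) := by
  obtain ⟨c, hc⟩ := Nat.Partrec.Code.exists_code.1 hf
  refine ⟨fun t a => (Nat.Partrec.Code.evaln t c (Encodable.encode a)).bind
    (fun n => (Encodable.decode n : Option β)), ?_, ?_, ?_⟩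
  · refine Computable.option_bind ?_ ?_
    · exact Nat.Partrec.Code.primrec_evaln.to_comp.comp
        ((Computable.fst.pair (Computable.const c)).pair (Computable.encode.comp Computable.snd))
    · exact Computable.decode.comp Computable.snd
  · intro t t' a b htt h
    rw [Option.bind_eq_some_iff] at h ⊢
    obtain ⟨n, h1, h2⟩ := h
    exact ⟨n, Nat.Partrec.Code.evaln_mono htt h1, h2⟩
  · intro a b
    have key : ∀ n, n ∈ c.eval (Encodable.encode a) ↔ ∃ b ∈ f a, Encodable.encode b = n := by
      intro n
      rw [hc]
      simp
    constructor
    · intro hb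
      obtain ⟨t, ht⟩ := Nat.Partrec.Code.evaln_complete.1 ((key _).2 ⟨b, hb, rfl⟩)
      refine ⟨t, ?_⟩
      rw [Option.bind_eq_some_iff]
      exact ⟨_, ht, Encodable.encodek b⟩
    · rintro ⟨t, ht⟩
      rw [Option.bind_eq_some_iff] at ht
      obtain ⟨n, h1, h2⟩ := ht
      obtain ⟨b', hb', rfl⟩ := (key n).1 (Nat.Partrec.Code.evaln_sound h1)
      rw [Encodable.encodek] at h2
      cases h2
      exact hb'

/-- Raw list of emissions, newest first. -/
def rawEm {β : Type} (e : ℕ → Option β) : ℕ → List β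
  | 0 => []
  | t + 1 => (e t).toList ++ rawEm e t

theorem rawEm_suffix {β : Type} (e : ℕ → Option β) {t t' : ℕ} (h : t ≤ t') :
    rawEm e t <:+ rawEm e t' := by
  induction h with
  | refl => exact List.suffix_rfl
  | step _ ih => exact ih.trans (List.suffix_append _ _)

theorem mem_rawEm {β : Type} (e : ℕ → Option β) (t : ℕ) (b : β) :
    b ∈ rawEm e t ↔ ∃ s < t, e s = some b := by
  induction t with
  | zero => simp [rawEm]
  | succ t ih =>
    simp only [rawEm, List.mem_append, ih, Option.mem_toList]
    constructor
    · rintro (h | ⟨s, h1, h2⟩)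
      · exact ⟨t, by omega, h⟩
      · exact ⟨s, by omega, h2⟩
    · rintro ⟨s, h1, h2⟩
      rcases Nat.lt_succ_iff_lt_or_eq.1 h1 with h | h
      · exact Or.inr ⟨s, h, h2⟩
      · subst h; exact Or.inl h2

theorem computable_rawEm {α β : Type} [Primcodable α] [Primcodable β] {e : α → ℕ → Option β}
    (he : Computable₂ e) : Computable₂ (fun a t => rawEm (e a) t) := by
  have : Computable (fun p : α × ℕ => (Nat.rec [] (fun s ih => (e p.1 s).toList ++ ih) p.2 : List β)) := by
    refine Computable.nat_rec (h := fun (p : α × ℕ) (q : ℕ × List β) => (e p.1 q.1).toList ++ q.2)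
      Computable.snd (Computable.const []) ?_
    refine Computable.list_append.comp (Primrec.optionToList.to_comp.comp (he.comp ?_ ?_)) ?_
    · exact Computable.fst.comp Computable.fst
    · exact Computable.fst.comp Computable.snd
    · exact Computable.snd.comp Computable.snd
  refine this.of_eq ?_
  rintro ⟨a, t⟩
  simp only
  induction t with
  | zero => rfl
  | succ t ih => simp only [rawEm]; rw [ih]

theorem card_strings (w : ℕ) : ∃ s : Finset BStr, s.card = 2 ^ w ∧ ∀ r : BStr, r.length = w → r ∈ s := by
  refine ⟨(Finset.univ : Finset (List.Vector Bool w)).image List.Vector.toList, ?_, ?_⟩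
  · rw [Finset.card_image_of_injective _ List.Vector.toList_injective]
    simp
  · intro r hr
    simp only [Finset.mem_image, Finset.mem_univ, true_and]
    exact ⟨⟨r, hr⟩, rfl⟩

/-- Enumeration of the values of a partial computable function on strings of given length. -/
theorem exists_enum {α β : Type} [Primcodable α] [Primcodable β]
    (R : α → BStr →. β) (hR : Partrec₂ R) (w : α → ℕ) (hw : Computable w) :
    ∃ En : α → ℕ → List β, Computable₂ En ∧
      (∀ a t t', t ≤ t' → En a t <:+ En a t') ∧
      (∀ a t, (En a t).length ≤ 2 ^ w a) ∧
      (∀ a r b, r.length = w a → b ∈ R a r → ∃ t, b ∈ En a t) ∧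
      (∀ a t b, b ∈ En a t → ∃ r, r.length = w a ∧ b ∈ R a r) := by
  have : DecidableEq β := Encodable.decidableEqOfEncodable β
  obtain ⟨ev, hev, hmono, hspec⟩ := exists_ev (fun p : α × BStr => R p.1 p.2) hR
  let e : α → ℕ → Option β := fun a s => (Encodable.decode s : Option (ℕ × BStr)).bind
    (fun q => bif decide (q.2.length = w a) then ev q.1 (a, q.2) else none)
  have he : Computable₂ e := by
    refine Computable.option_bind (Computable.decode.comp Computable.snd) ?_
    refine Computable.cond ?_ ?_ (Computable.const none)
    · refine (Primrec.eq (α := ℕ)).decide.to_comp.comp ?_ ?_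
      · exact Computable.list_length.comp (Computable.snd.comp Computable.snd)
      · exact hw.comp (Computable.fst.comp Computable.fst)
    · refine hev.comp (Computable.fst.comp Computable.snd) ?_
      exact (Computable.fst.comp Computable.fst).pair (Computable.snd.comp Computable.snd)
  have hes : ∀ a b, (∃ s, e a s = some b) ↔ ∃ r, r.length = w a ∧ b ∈ R a r := by
    intro a b
    constructor
    · rintro ⟨s, hs⟩
      simp only [e, Option.bind_eq_some_iff] at hs
      obtain ⟨q, _, h2⟩ := hs
      by_cases hq : q.2.length = w a
      · simp [hq] at h2
        exact ⟨q.2, hq, (hspec (a, q.2) b).2 ⟨_, h2⟩⟩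
      · simp [hq] at h2
    · rintro ⟨r, hr, hb⟩
      obtain ⟨t, ht⟩ := (hspec (a, r) b).1 hb
      refine ⟨Encodable.encode (t, r), ?_⟩
      simp [e, hr, ht]
  have hmem : ∀ a t b, b ∈ hv 1 (rawEm (e a) t) ↔ ∃ s < t, e a s = some b := by
    intro a t b
    rw [mem_hv le_rfl, ← mem_rawEm]
    exact List.count_pos_iff
  refine ⟨fun a t => hv 1 (rawEm (e a) t), ?_, ?_, ?_, ?_, ?_⟩
  · exact primrec_hv.to_comp.comp (Computable.const 1) (computable_rawEm he)
  · intro a t t' h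
    exact hv_suffix 1 (rawEm_suffix _ h)
  · intro a t
    obtain ⟨s, hs, hs'⟩ := card_strings (w a)
    have h1 : ∀ b ∈ (hv 1 (rawEm (e a) t)).toFinset, ∃ r ∈ s, b ∈ R a r := by
      intro b hb
      rw [List.mem_toFinset, hmem] at hb
      obtain ⟨s, _, h⟩ := hb
      obtain ⟨r, h1, h2⟩ := (hes a b).1 ⟨s, h⟩
      exact ⟨r, hs' r h1, h2⟩
    choose! g hg1 hg2 using h1
    rw [← List.toFinset_card_of_nodup (nodup_hv le_rfl _), ← hs]
    refine Finset.card_le_card_of_injOn g (fun b hb => hg1 b hb) ?_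
    intro b hb b' hb' hbb
    have := hg2 b hb
    rw [hbb] at this
    exact Part.mem_unique this (hg2 b' hb')
  · intro a r b hr hb
    obtain ⟨s, hs⟩ := (hes a b).2 ⟨r, hr, hb⟩
    exact ⟨s + 1, (hmem _ _ _).2 ⟨s, by omega, hs⟩⟩
  · intro a t b hb
    obtain ⟨s, _, hs⟩ := (hmem _ _ _).1 hb
    exact (hes a b).1 ⟨s, hs⟩

/-- Little-endian value of a string. -/
def dec (p : BStr) : ℕ := p.foldr (fun b n => 2 * n + cond b 1 0) 0

theorem dec_cons (b : Bool) (p : BStr) : dec (b :: p) = 2 * dec p + cond b 1 0 := rfl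

theorem dec_append (p q : BStr) : dec (p ++ q) = dec p + 2 ^ p.length * dec q := by
  induction p with
  | nil => simp [dec]
  | cons b p ih =>
    rw [List.cons_append, dec_cons, dec_cons, ih, List.length_cons, pow_succ]
    ring

theorem dec_lt (p : BStr) : dec p < 2 ^ p.length := by
  induction p with
  | nil => simp [dec]
  | cons b p ih =>
    rw [dec_cons, List.length_cons, pow_succ]
    cases b <;> simp <;> omega

theorem exists_dec (w : ℕ) : ∀ i < 2 ^ w, ∃ p : BStr, p.length = w ∧ dec p = i := by
  induction w with
  | zero => intro i hi; exact ⟨[], rfl, by simp at hi; simp [dec, hi]⟩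
  | succ w ih =>
    intro i hi
    obtain ⟨p, h1, h2⟩ := ih (i / 2) (by rw [pow_succ] at hi; omega)
    refine ⟨decide (i % 2 = 1) :: p, by simp [h1], ?_⟩
    rw [dec_cons, h2]
    rcases Nat.mod_two_eq_zero_or_one i with h | h <;> simp [h] <;> omega

theorem primrec_dec : Primrec dec := by
  refine Primrec.list_foldr (h := fun (_ : BStr) (q : Bool × ℕ) => 2 * q.2 + cond q.1 1 0)
    Primrec.id (Primrec.const 0) ?_
  refine Primrec.nat_add.comp (Primrec.nat_mul.comp (Primrec.const 2) (Primrec.snd.comp Primrec.snd)) ?_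
  exact Primrec.cond (Primrec.fst.comp Primrec.snd) (Primrec.const 1) (Primrec.const 0)

theorem primrec_pow2 : Primrec (fun n : ℕ => 2 ^ n) := by
  have := (Primrec₂.unpaired'.1 Nat.Primrec.pow)
  exact this.comp (Primrec.const 2) Primrec.id

/-- Parameter tuples. -/
abbrev P4 := ℕ × ℕ × ℕ × ℕ
/-- Parameter tuples. -/
abbrev P5 := ℕ × P4

/-- All components of the parameter tuple are bounded. -/
def Bd (B : ℕ) (a : P5) : Prop :=
  a.1 ≤ B ∧ a.2.1 ≤ B ∧ a.2.2.1 ≤ B ∧ a.2.2.2.1 ≤ B ∧ a.2.2.2.2 ≤ B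

/-- Integer logarithm used for error terms. -/
def lam (n : ℕ) : ℕ := Nat.log 2 (n + 2)

theorem lam_pos (n : ℕ) : 1 ≤ lam n := by
  unfold lam
  exact Nat.log_pos (by norm_num) (by omega)

theorem lt_lam (n : ℕ) : n + 2 < 2 ^ (lam n + 1) := Nat.lt_pow_succ_log_self (by norm_num) _

theorem pair_bd {a b X : ℕ} (ha : a < X) (hb : b < X) : Nat.pair a b < X ^ 2 := by
  refine (Nat.pair_lt_max_add_one_sq a b).trans_le ?_
  exact Nat.pow_le_pow_left (by omega) 2

theorem encode_bd {B : ℕ} {a : P5} (h : Bd B a) : Encodable.encode a < (B + 1) ^ 16 := by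
  obtain ⟨a, b, c, d, e⟩ := a
  obtain ⟨h1, h2, h3, h4, h5⟩ := h
  simp only at h1 h2 h3 h4 h5
  simp only [Encodable.encode_prod_val, Encodable.encode_nat]
  have mon : ∀ {x k : ℕ}, x ≤ B → 1 ≤ k → x < (B + 1) ^ k := by
    intro x k hx hk
    calc x < (B + 1) ^ 1 := by rw [pow_one]; omega
      _ ≤ (B + 1) ^ k := Nat.pow_le_pow_right (by omega) hk
  have e1 := pair_bd (mon h4 le_rfl) (mon h5 le_rfl)
  rw [← pow_mul] at e1
  have e2 := pair_bd (mon h3 (by norm_num)) e1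
  rw [← pow_mul] at e2
  have e3 := pair_bd (mon h2 (by norm_num)) e2
  rw [← pow_mul] at e3
  have e4 := pair_bd (mon h1 (by norm_num)) e3
  rw [← pow_mul] at e4
  exact e4

theorem encode_bd' {K n : ℕ} {a : P5} (h : Bd (K * (n + 2)) a) :
    Encodable.encode a < 2 ^ (16 * (K + lam n + 2)) := by
  refine (encode_bd h).trans_le ?_
  rw [mul_comm 16, pow_mul]
  refine Nat.pow_le_pow_left ?_ 16
  have h1 : K + 1 < 2 ^ (K + 1) := Nat.lt_two_pow_self
  have h2 := lt_lam n
  calc K * (n + 2) + 1 ≤ (K + 1) * (n + 2) := by nlinarith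
    _ ≤ 2 ^ (K + 1) * 2 ^ (lam n + 1) := Nat.mul_le_mul h1.le h2.le
    _ = 2 ^ (K + lam n + 2) := by rw [← pow_add]; congr 1; ring

/-- Decoding of a self-delimiting parameter followed by an index. -/
def dcd (p : BStr) : P5 × ℕ :=
  let L := p.findIdx (fun b => !b)
  let v := dec p / 2 ^ (L + 1)
  (((Encodable.decode (v % 2 ^ L) : Option P5)).getD (0, 0, 0, 0, 0), v / 2 ^ L)

theorem computable_dcd : Computable dcd := by
  have hL : Primrec (fun p : BStr => p.findIdx (fun b => !b)) :=
    Primrec.list_findIdx Primrec.id (Primrec.not.comp Primrec.snd)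
  have hv : Primrec (fun p : BStr => dec p / 2 ^ (p.findIdx (fun b => !b) + 1)) :=
    Primrec.nat_div.comp primrec_dec (primrec_pow2.comp (Primrec.succ.comp hL))
  refine Computable.pair ?_ ?_
  · refine Computable.option_getD (Computable.decode.comp ?_) (Computable.const _)
    exact (Primrec.nat_mod.comp hv (primrec_pow2.comp hL)).to_comp
  · exact (Primrec.nat_div.comp hv (primrec_pow2.comp hL)).to_comp

theorem findIdx_rep (L : ℕ) (p : BStr) :
    (List.replicate L true ++ false :: p).findIdx (fun b => !b) = L := by
  induction L with
  | zero => simp [List.findIdx_cons]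
  | succ L ih => rw [List.replicate_succ, List.cons_append, List.findIdx_cons, ih]; simp

theorem exists_dcd (K : ℕ) : ∃ c : ℕ, ∀ (n : ℕ) (a : P5) (i M : ℕ), Bd (K * (n + 2)) a → i < 2 ^ M →
    ∃ p : BStr, dcd p = (a, i) ∧ p.length ≤ M + c * lam n := by
  refine ⟨32 * (K + 3) + 1, fun n a i M ha hi => ?_⟩
  have hl := lam_pos n
  set L := 16 * (K + lam n + 2) with hL
  obtain ⟨q, hq, hq'⟩ := exists_dec L _ (encode_bd' ha)
  obtain ⟨u, hu, hu'⟩ := exists_dec M i hi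
  refine ⟨List.replicate L true ++ false :: (q ++ u), ?_, ?_⟩
  · have h1 : dec (List.replicate L true ++ false :: (q ++ u)) / 2 ^ (L + 1) = dec (q ++ u) := by
      have : List.replicate L true ++ false :: (q ++ u)
          = (List.replicate L true ++ [false]) ++ (q ++ u) := by simp
      rw [this, dec_append (List.replicate L true ++ [false])]
      have h2 := dec_lt (List.replicate L true ++ [false])
      simp only [List.length_append, List.length_replicate, List.length_singleton] at h2 ⊢
      rw [Nat.add_mul_div_left _ _ (by positivity), Nat.div_eq_of_lt h2, zero_add]
    have hlt := dec_lt q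
    simp only [dcd, findIdx_rep, h1]
    rw [dec_append, hq, Nat.add_mul_mod_self_left, Nat.add_mul_div_left _ _ (by positivity)]
    rw [hq] at hlt
    rw [Nat.mod_eq_of_lt hlt, Nat.div_eq_of_lt hlt, hq', hu', Encodable.encodek, zero_add]
    rfl
  · simp only [List.length_append, List.length_replicate, List.length_cons, hq, hu]
    rw [hL]
    nlinarith

theorem Cw_le {D : BStr →. BStr} {x p : BStr} (h : x ∈ D p) : Cw D x ≤ (p.length : ℕ∞) :=
  iInf₂_le p h

theorem CwCond_le {E : BStr → BStr →. BStr} {x y p : BStr} (h : x ∈ E p y) :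
    CwCond E x y ≤ (p.length : ℕ∞) :=
  iInf₂_le (f := fun (p : BStr) (_ : x ∈ E p y) => (p.length : ℕ∞)) p h

theorem toNat_le' {a : ℕ∞} {k : ℕ} (h : a ≤ (k : ℕ∞)) : a.toNat ≤ k :=
  ENat.toNat_le_of_le_natCast h

/-- Upper bound for plain complexity from any description method. -/
theorem C_le_of {D : BStr →. BStr} (hD : OptimalDM D) {D' : BStr →. BStr} (hD' : Partrec D') :
    ∃ c : ℕ, ∀ x p, x ∈ D' p → C D x ≤ p.length + c := by
  obtain ⟨c, hc⟩ := hD.2 D' hD'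
  refine ⟨c, fun x p h => toNat_le' ?_⟩
  refine (hc x).trans ?_
  push_cast
  gcongr
  exact Cw_le h

theorem Ccond_le_of {E : BStr → BStr →. BStr} (hE : OptimalCDM E) {E' : BStr → BStr →. BStr}
    (hE' : Partrec₂ E') :
    ∃ c : ℕ, ∀ x y p, x ∈ E' p y → Ccond E x y ≤ p.length + c := by
  obtain ⟨c, hc⟩ := hE.2 E' hE'
  refine ⟨c, fun x y p h => toNat_le' ?_⟩
  refine (hc x y).trans ?_
  push_cast
  gcongr
  exact CwCond_le h

/-- Existence of an optimal program. -/
theorem exists_prog {D : BStr →. BStr} (hD : OptimalDM D) (x : BStr) :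
    ∃ p : BStr, p.length = C D x ∧ x ∈ D p := by
  have hne : ∃ p, x ∈ D p := by
    by_contra hno
    push Not at hno
    obtain ⟨c, hc⟩ := hD.2 (fun p => Part.some p) Partrec.some
    have h1 : Cw D x = ⊤ := by
      unfold Cw
      simp [hno]
    have h2 := hc x
    have h3 : Cw (fun p => Part.some p) x ≤ (x.length : ℕ∞) := Cw_le (by simp)
    rw [h1] at h2
    have h4 : (⊤ : ℕ∞) ≤ ((x.length + c : ℕ) : ℕ∞) := by
      push_cast
      exact h2.trans (by gcongr)
    exact absurd h4 (by simp)
  have hex : ∃ k, ∃ p : BStr, p.length = k ∧ x ∈ D p := by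
    obtain ⟨p, hp⟩ := hne
    exact ⟨_, p, rfl, hp⟩
  obtain ⟨p, hp, hx⟩ := Nat.find_spec hex
  refine ⟨p, ?_, hx⟩
  have h1 : Cw D x = (p.length : ℕ∞) := by
    refine le_antisymm (Cw_le hx) ?_
    refine le_iInf₂ fun r hr => ?_
    rw [hp]
    exact_mod_cast Nat.find_min' hex ⟨r, rfl, hr⟩
  rw [C, h1]
  rfl

theorem gen_C {D : BStr →. BStr} (hD : OptimalDM D) (F : P5 → ℕ →. BStr) (hF : Partrec₂ F) (K : ℕ) :
    ∃ c : ℕ, ∀ (n : ℕ) (a : P5) (i M : ℕ) (x : BStr), Bd (K * (n + 2)) a → i < 2 ^ M →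
      x ∈ F a i → C D x ≤ M + c * lam n := by
  obtain ⟨c1, h1⟩ := exists_dcd K
  obtain ⟨c2, h2⟩ := C_le_of hD (D' := fun p => F (dcd p).1 (dcd p).2)
    (hF.comp (Computable.fst.comp computable_dcd) (Computable.snd.comp computable_dcd))
  refine ⟨c1 + c2, fun n a i M x ha hi hx => ?_⟩
  obtain ⟨p, hp, hp'⟩ := h1 n a i M ha hi
  have := h2 x p (by rw [hp]; exact hx)
  nlinarith [lam_pos n]

theorem gen_Ccond {E : BStr → BStr →. BStr} (hE : OptimalCDM E) (F : P5 × ℕ → BStr →. BStr)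
    (hF : Partrec₂ F) (K : ℕ) :
    ∃ c : ℕ, ∀ (n : ℕ) (a : P5) (i M : ℕ) (x y : BStr), Bd (K * (n + 2)) a → i < 2 ^ M →
      x ∈ F (a, i) y → Ccond E x y ≤ M + c * lam n := by
  obtain ⟨c1, h1⟩ := exists_dcd K
  obtain ⟨c2, h2⟩ := Ccond_le_of hE (E' := fun p y => F (dcd p) y)
    (hF.comp (computable_dcd.comp Computable.fst) Computable.snd)
  refine ⟨c1 + c2, fun n a i M x y ha hi hx => ?_⟩
  obtain ⟨p, hp, hp'⟩ := h1 n a i M ha hi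
  have := h2 x y p (by rw [hp]; exact hx)
  nlinarith [lam_pos n]

theorem suffix_get {β : Type} {l l' : List β} (h : l <:+ l') {i : ℕ} {b : β}
    (hb : l.reverse[i]? = some b) : l'.reverse[i]? = some b := by
  obtain ⟨t, rfl⟩ := h
  rw [List.reverse_append]
  have hi : i < l.reverse.length := by
    rw [List.getElem?_eq_some_iff] at hb
    exact hb.1
  rw [List.getElem?_append_left hi]
  exact hb

theorem mem_get {β : Type} {l : List β} {b : β} (hb : b ∈ l) :
    ∃ i < l.length, l.reverse[i]? = some b := by
  obtain ⟨i, hi⟩ := List.mem_iff_getElem?.1 (List.mem_reverse.2 hb)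
  refine ⟨i, ?_, hi⟩
  rw [List.getElem?_eq_some_iff] at hi
  simpa using hi.1

theorem rfindOpt_of_mono {β : Type} {f : ℕ → Option β}
    (H : ∀ a m n, m ≤ n → f m = some a → f n = some a) {a : β} {t : ℕ} (h : f t = some a) :
    a ∈ Nat.rfindOpt f :=
  (Nat.rfindOpt_mono (fun {a m n} hmn hm => H a m n hmn hm)).2 ⟨t, h⟩

/-- The hard half of symmetry of information for pairs with short effective descriptions. -/
theorem sym_info {D : BStr →. BStr} (hD : OptimalDM D) {E : BStr → BStr →. BStr}
    (hE : OptimalCDM E) (R : P4 → BStr →. BStr × BStr) (hR : Partrec₂ R)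
    (w : P4 → ℕ) (hw : Computable w) (K : ℕ) :
    ∃ c : ℕ, ∀ (n : ℕ) (a : P4) (x z r : BStr), Bd (K * (n + 2)) (w a, a) → r.length = w a →
      (x, z) ∈ R a r → C D z + Ccond E x z ≤ w a + c * lam n := by
  obtain ⟨En, hEn, hsuf, hlen, hcomp, -⟩ := exists_enum R hR w hw
  have hfil : Primrec₂ (fun (L : List (BStr × BStr)) (z : BStr) =>
      L.filter (fun q => decide (q.2 = z))) :=
    PrimrecRel.listFilter (R := fun (q : BStr × BStr) (z : BStr) => q.2 = z)
      (Primrec.eq.comp₂ (Primrec.snd.comp Primrec.fst) Primrec.snd)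
  let f1 : (P5 × ℕ) × BStr → ℕ → Option BStr := fun q t =>
    (((En q.1.1.2 t).filter (fun s => decide (s.2 = q.2))).reverse[q.1.2]?).map Prod.fst
  have hf1 : Computable₂ f1 := by
    refine Computable.option_map (Computable.list_getElem?.comp (Computable.list_reverse.comp
      (hfil.to_comp.comp (hEn.comp ?_ Computable.snd) ?_)) ?_) (Computable.fst.comp Computable.snd)
    · exact Computable.snd.comp (Computable.fst.comp (Computable.fst.comp Computable.fst))
    · exact Computable.snd.comp Computable.fst
    · exact Computable.snd.comp (Computable.fst.comp Computable.fst)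
  let f2 : P5 × ℕ → ℕ → Option BStr := fun q t =>
    (hv (2 ^ q.1.1) ((En q.1.2 t).map Prod.snd)).reverse[q.2]?
  have hf2 : Computable₂ f2 := by
    refine Computable.list_getElem?.comp (Computable.list_reverse.comp
      (primrec_hv.to_comp.comp (primrec_pow2.to_comp.comp ?_) ?_)) ?_
    · exact Computable.fst.comp (Computable.fst.comp Computable.fst)
    · have : Primrec (fun l : List (BStr × BStr) => l.map Prod.snd) :=
        Primrec.list_map Primrec.id (Primrec.snd.comp Primrec.snd)
      refine this.to_comp.comp (hEn.comp ?_ Computable.snd)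
      exact Computable.snd.comp (Computable.fst.comp Computable.fst)
    · exact Computable.snd.comp Computable.fst
  obtain ⟨c1, h1⟩ := gen_Ccond hE (fun q y => Nat.rfindOpt (f1 (q, y)))
    (Partrec.rfindOpt hf1) K
  obtain ⟨c2, h2⟩ := gen_C hD (fun a i => Nat.rfindOpt (f2 (a, i)))
    (Partrec.rfindOpt hf2) K
  refine ⟨c1 + c2 + 1, fun n a x z r ha hr hxz => ?_⟩
  obtain ⟨t, ht⟩ := hcomp a r _ hr hxz
  set A := En a t with hA
  have hmem : (x, z) ∈ A.filter (fun s => decide (s.2 = z)) := by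
    rw [List.mem_filter]; exact ⟨ht, by simp⟩
  set cnt := (A.filter (fun s => decide (s.2 = z))).length with hcnt
  have hcnt0 : cnt ≠ 0 := by
    have := List.length_pos_of_mem hmem
    omega
  set e := Nat.log 2 cnt with he
  have e1 : 2 ^ e ≤ cnt := Nat.pow_log_le_self 2 hcnt0
  have e2 : cnt < 2 ^ (e + 1) := Nat.lt_pow_succ_log_self (by norm_num) _
  have e3 : cnt ≤ 2 ^ w a := (List.length_filter_le _ _).trans (hlen a t)
  have e4 : e ≤ w a := (Nat.pow_le_pow_iff_right (by norm_num : 1 < 2)).1 (e1.trans e3)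
  have hB : Bd (K * (n + 2)) (e, a) := ⟨e4.trans ha.1, ha.2⟩
  -- conditional part
  obtain ⟨i, hi, hi'⟩ := mem_get hmem
  have b1 := h1 n (e, a) i (e + 1) x z hB (by omega) (by
    refine rfindOpt_of_mono (t := t) ?_ ?_
    · intro b s s' hss hs
      simp only [f1, Option.map_eq_some_iff] at hs ⊢
      obtain ⟨q, hq, hq'⟩ := hs
      exact ⟨q, suffix_get ((hsuf a s s' hss).filter _) hq, hq'⟩
    · simp only [f1, Option.map_eq_some_iff]
      exact ⟨_, hi', rfl⟩)
  -- unconditional part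
  have hz : z ∈ hv (2 ^ e) (A.map Prod.snd) := by
    rw [mem_hv' Nat.one_le_two_pow, List.filter_map, List.length_map]; exact e1
  obtain ⟨j, hj, hj'⟩ := mem_get hz
  have hjlt : j < 2 ^ (w a - e) := by
    refine hj.trans_le ?_
    have h3 := hv_length (Nat.one_le_two_pow : 1 ≤ 2 ^ e) (A.map Prod.snd)
    rw [List.length_map] at h3
    have h4 := h3.trans (hlen a t)
    have h5 : 2 ^ w a = 2 ^ (w a - e) * 2 ^ e := by rw [← pow_add]; congr 1; omega
    rw [h5] at h4
    exact Nat.le_of_mul_le_mul_right h4 (by positivity)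
  have b2 := h2 n (e, a) j (w a - e) z hB hjlt (by
    refine rfindOpt_of_mono (t := t) ?_ ?_
    · intro b s s' hss hs
      exact suffix_get (hv_suffix _ ((hsuf a s s' hss).map _)) hs
    · exact hj')
  have hl := lam_pos n
  have : c1 * lam n + c2 * lam n + lam n = (c1 + c2 + 1) * lam n := by ring
  omega

/-- Search for a short list representing a set with the given code. -/
noncomputable def invL (enc : Finset BStr → BStr) (l : ℕ) (z : BStr) : Part (List BStr) :=
  Nat.rfindOpt (fun s => (Encodable.decode s : Option (List BStr)).bind
    (fun v => bif (decide (v.length ≤ 2 ^ l) && decide (enc v.toFinset = z)) then some v else none))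

theorem partrec_invL {enc : Finset BStr → BStr} (henc : SetEncoding enc) :
    Partrec₂ (invL enc) := by
  refine Partrec.rfindOpt (f := fun (q : ℕ × BStr) s =>
    (Encodable.decode s : Option (List BStr)).bind
    (fun v => bif (decide (v.length ≤ 2 ^ q.1) && decide (enc v.toFinset = q.2))
      then some v else none)) ?_
  refine Computable.option_bind (Computable.decode.comp Computable.snd) ?_
  refine Computable.cond ?_ (Computable.option_some.comp Computable.snd) (Computable.const none)
  refine Primrec.and.to_comp.comp ?_ ?_
  · refine Primrec.nat_le.decide.to_comp.comp (Computable.list_length.comp Computable.snd) ?_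
    exact primrec_pow2.to_comp.comp (Computable.fst.comp (Computable.fst.comp Computable.fst))
  · refine (Primrec.eq (α := BStr)).decide.to_comp.comp (henc.2.comp Computable.snd) ?_
    exact Computable.snd.comp (Computable.fst.comp Computable.fst)

theorem invL_spec {enc : Finset BStr → BStr} {l : ℕ} {z : BStr} {v : List BStr}
    (h : v ∈ invL enc l z) : v.length ≤ 2 ^ l ∧ enc v.toFinset = z := by
  obtain ⟨s, hs⟩ := Nat.rfindOpt_spec h
  rw [Option.mem_def, Option.bind_eq_some_iff] at hs
  obtain ⟨v', _, h2⟩ := hs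
  by_cases h3 : v'.length ≤ 2 ^ l ∧ enc v'.toFinset = z
  · simp [h3] at h2
    subst h2
    exact h3
  · exfalso
    rw [← Bool.decide_and] at h2
    simp [h3] at h2

theorem invL_dom {enc : Finset BStr → BStr} (henc : SetEncoding enc) {l : ℕ} {S : Finset BStr}
    (hS : S.card ≤ 2 ^ l) : ∃ v ∈ invL enc l (enc S), v.length ≤ 2 ^ l ∧ v.toFinset = S := by
  have hdom : (invL enc l (enc S)).Dom := by
    refine Nat.rfindOpt_dom.2 ⟨Encodable.encode S.toList, S.toList, ?_⟩
    have : enc S.toList.toFinset = enc S := by rw [Finset.toList_toFinset]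
    simp only [Encodable.encodek, Option.bind_some, Option.mem_def, this, Finset.length_toList]
    simp [hS]
  refine ⟨_, Part.get_mem hdom, ?_⟩
  have := invL_spec (Part.get_mem hdom)
  exact ⟨this.1, henc.1 this.2⟩

theorem exists_LL {D : BStr →. BStr} (hD : OptimalDM D)
    {enc : Finset BStr → BStr} (henc : SetEncoding enc) :
    ∃ LL : ℕ × ℕ → ℕ → List (List BStr), Computable₂ LL ∧
      (∀ a t t', t ≤ t' → LL a t <:+ LL a t') ∧
      (∀ a t, (LL a t).length ≤ 2 ^ a.1) ∧
      (∀ a t v, v ∈ LL a t → v.length ≤ 2 ^ a.2) ∧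
      (∀ S l, S.card ≤ 2 ^ l → ∃ t, ∃ v ∈ LL (C D (enc S), l) t, v.toFinset = S) := by
  obtain ⟨LL, h1, h2, h3, h4, h5⟩ := exists_enum
    (fun (a : ℕ × ℕ) (r : BStr) => (D r).bind (fun z => invL enc a.2 z))
    (Partrec.bind (hD.1.comp Computable.snd)
      ((partrec_invL henc).comp (Computable.snd.comp (Computable.fst.comp Computable.fst))
        Computable.snd)) (fun a => a.1) Computable.fst
  refine ⟨LL, h1, h2, h3, ?_, ?_⟩
  · intro a t v hv
    obtain ⟨r, _, hr⟩ := h5 a t v hv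
    obtain ⟨z, _, hz⟩ := Part.mem_bind_iff.1 hr
    exact (invL_spec hz).1
  · intro S l hS
    obtain ⟨p, hp, hp'⟩ := exists_prog hD (enc S)
    obtain ⟨v, hv, _, hv'⟩ := invL_dom henc hS
    obtain ⟨t, ht⟩ := h4 (C D (enc S), l) p v hp (Part.mem_bind_iff.2 ⟨_, hp', hv⟩)
    exact ⟨t, v, ht, hv'⟩

theorem lemB {D : BStr →. BStr} (hD : OptimalDM D) {E : BStr → BStr →. BStr}
    (hE : OptimalCDM E) {enc : Finset BStr → BStr} (henc : SetEncoding enc)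
    (LL : ℕ × ℕ → ℕ → List (List BStr)) (hLL : Computable₂ LL)
    (hsuf : ∀ a t t', t ≤ t' → LL a t <:+ LL a t') (K : ℕ) :
    ∃ c : ℕ, ∀ (n m l k : ℕ) (x : BStr) (t : ℕ) (v : List BStr),
      Bd (K * (n + 2)) (C D x + k, m, l, k, C D x) → v ∈ LL (m, l) t → x ∈ v →
      ((LL (m, l) t).filter (fun u => decide (x ∈ u))).length ≤ 2 ^ k →
      C D (enc v.toFinset) + Ccond E x (enc v.toFinset) ≤ C D x + k + c * lam n := by
  have hmemrel : PrimrecRel (fun (v : List BStr) (y : BStr) => y ∈ v) := by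
    refine (PrimrecRel.exists_mem_list (Primrec.eq (α := BStr))).of_eq ?_
    intro v y
    simp
  have hfil : Primrec₂ (fun (L : List (List BStr)) (y : BStr) =>
      L.filter (fun u => decide (y ∈ u))) := PrimrecRel.listFilter hmemrel
  let g : (P4 × BStr) × BStr → ℕ → Option (BStr × BStr) := fun q t =>
    ((((LL (q.1.1.1, q.1.1.2.1) t).filter (fun u => decide (q.2 ∈ u))).reverse)[dec
      (q.1.2.drop q.1.1.2.2.2)]?).map (fun v => (q.2, enc v.toFinset))
  have hg : Computable₂ g := by
    refine Computable.option_map (Computable.list_getElem?.comp (Computable.list_reverse.comp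
      (hfil.to_comp.comp (hLL.comp (Computable.pair ?_ ?_) Computable.snd) ?_)) ?_) ?_
    · exact Computable.fst.comp (Computable.fst.comp (Computable.fst.comp Computable.fst))
    · exact Computable.fst.comp (Computable.snd.comp (Computable.fst.comp
        (Computable.fst.comp Computable.fst)))
    · exact Computable.snd.comp Computable.fst
    · refine primrec_dec.to_comp.comp (Primrec.list_drop.to_comp.comp ?_ ?_)
      · exact Computable.snd.comp (Computable.snd.comp (Computable.snd.comp (Computable.fst.comp
          (Computable.fst.comp Computable.fst))))
      · exact Computable.snd.comp (Computable.fst.comp Computable.fst)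
    · exact Computable.pair (Computable.snd.comp (Computable.fst.comp Computable.fst))
        (henc.2.comp Computable.snd)
  let R : P4 → BStr →. BStr × BStr := fun a r =>
    (D (r.take a.2.2.2)).bind (fun y => Nat.rfindOpt (g ((a, r), y)))
  have hR : Partrec₂ R := by
    refine Partrec.bind (hD.1.comp (Primrec.list_take.to_comp.comp ?_ Computable.snd)) ?_
    · exact Computable.snd.comp (Computable.snd.comp (Computable.snd.comp Computable.fst))
    · exact Partrec.rfindOpt hg
  obtain ⟨c, hc⟩ := sym_info hD hE R hR (fun a => a.2.2.2 + a.2.2.1)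
    (Primrec.nat_add.to_comp.comp
      (Computable.snd.comp (Computable.snd.comp Computable.snd))
      (Computable.fst.comp (Computable.snd.comp Computable.snd))) K
  refine ⟨c, fun n m l k x t v hB hv hx hlen => ?_⟩
  obtain ⟨p, hp, hpx⟩ := exists_prog hD x
  have hvm : v ∈ (LL (m, l) t).filter (fun u => decide (x ∈ u)) := by
    rw [List.mem_filter]; exact ⟨hv, by simpa using hx⟩
  obtain ⟨i, hi, hi'⟩ := mem_get hvm
  obtain ⟨u, hu, hu'⟩ := exists_dec k i (hi.trans_le hlen)
  refine hc n (m, l, k, C D x) x (enc v.toFinset) (p ++ u) hB (by simp [hp, hu]) ?_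
  refine Part.mem_bind_iff.2 ⟨x, ?_, ?_⟩
  · simp only [← hp, List.take_left']
    exact hpx
  · refine rfindOpt_of_mono (t := t) ?_ ?_
    · intro b s s' hss hs
      simp only [g, Option.map_eq_some_iff] at hs ⊢
      obtain ⟨q, hq, hq'⟩ := hs
      exact ⟨q, suffix_get ((hsuf (m, l) s s' hss).filter _) hq, hq'⟩
    · simp only [g, Option.map_eq_some_iff]
      refine ⟨v, ?_, rfl⟩
      simp only [← hp, List.drop_left', hu']
      exact hi'

/-- The `b`-th block of length `c`. -/
def blk (Q : List BStr) (c b : ℕ) : List BStr :=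
  (List.range c).filterMap (fun j => Q[b * c + j]?)

theorem primrec_blk : Primrec (fun q : List BStr × ℕ × ℕ => blk q.1 q.2.1 q.2.2) := by
  refine Primrec.listFilterMap (f := fun q : List BStr × ℕ × ℕ => List.range q.2.1)
    (g := fun q j => q.1[q.2.2 * q.2.1 + j]?) ?_ ?_
  · exact Primrec.list_range.comp (Primrec.fst.comp Primrec.snd)
  · refine Primrec.list_getElem?.comp (Primrec.fst.comp Primrec.fst)
      (Primrec.nat_add.comp (Primrec.nat_mul.comp ?_ ?_) Primrec.snd)
    · exact Primrec.snd.comp (Primrec.snd.comp Primrec.fst)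
    · exact Primrec.fst.comp (Primrec.snd.comp Primrec.fst)

theorem blk_card (Q : List BStr) (c b : ℕ) : (blk Q c b).toFinset.card ≤ c := by
  refine (List.toFinset_card_le _).trans ((List.length_filterMap_le _ _).trans ?_)
  simp

theorem mem_blk {Q : List BStr} {c r : ℕ} (hc : 0 < c) {x : BStr} (h : Q[r]? = some x) :
    x ∈ blk Q c (r / c) := by
  unfold blk
  rw [List.mem_filterMap]
  refine ⟨r % c, List.mem_range.2 (Nat.mod_lt _ hc), ?_⟩
  rw [Nat.div_add_mod']
  exact h

theorem comp_blk {α : Type} [Primcodable α] {enc : Finset BStr → BStr} (henc : SetEncoding enc)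
    {b : α → Bool} (hb : Computable b) {Q : α → List BStr} (hQ : Computable Q)
    {c i : α → ℕ} (hc : Computable c) (hi : Computable i) :
    Computable (fun a => bif b a then
      some (enc (blk (Q a).reverse (c a) (i a)).toFinset) else none) := by
  have h1 : Computable (fun a => blk (Q a).reverse (c a) (i a)) :=
    Computable.comp (f := fun q : List BStr × ℕ × ℕ => blk q.1 q.2.1 q.2.2)
      (g := fun a => ((Q a).reverse, c a, i a)) primrec_blk.to_comp
      ((Computable.list_reverse.comp hQ).pair (hc.pair hi))
  have h2 : Computable (fun a => enc (blk (Q a).reverse (c a) (i a)).toFinset) :=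
    Computable.comp (f := fun l : List BStr => enc l.toFinset)
      (g := fun a => blk (Q a).reverse (c a) (i a)) henc.2 h1
  exact Computable.cond hb (Computable.option_some.comp h2) (Computable.const none)

theorem comp_le {α : Type} [Primcodable α] {f g : α → ℕ} (hf : Computable f) (hg : Computable g) :
    Computable (fun a => decide (f a ≤ g a)) :=
  Primrec.nat_le.decide.to_comp.comp hf hg

theorem comp_eq {α : Type} [Primcodable α] {f g : α → ℕ} (hf : Computable f) (hg : Computable g) :
    Computable (fun a => decide (f a = g a)) :=
  (Primrec.eq (α := ℕ)).decide.to_comp.comp hf hg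

theorem filt_le_count {α : Type} [BEq α] [LawfulBEq α] (x : α) (M : List (List α))
    [∀ u : List α, Decidable (x ∈ u)] :
    (M.filter (fun u => decide (x ∈ u))).length ≤ M.flatten.count x := by
  induction M with
  | nil => simp
  | cons v M ih =>
    rw [List.flatten_cons, List.count_append, List.filter_cons]
    by_cases hv : x ∈ v
    · have := List.count_pos_iff.2 hv
      simp only [hv, decide_true, if_true, List.length_cons]
      omega
    · simp only [hv, decide_false]
      simp only [Bool.false_eq_true, if_false]
      omega

set_option maxHeartbeats 1000000 in
theorem lemA {D : BStr →. BStr} (hD : OptimalDM D)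
    {enc : Finset BStr → BStr} (henc : SetEncoding enc)
    (LL : ℕ × ℕ → ℕ → List (List BStr)) (hLL : Computable₂ LL)
    (hsuf : ∀ a t t', t ≤ t' → LL a t <:+ LL a t')
    (hlen : ∀ a t, (LL a t).length ≤ 2 ^ a.1)
    (hcard : ∀ a t v, v ∈ LL a t → v.length ≤ 2 ^ a.2) (K : ℕ) :
    ∃ c : ℕ, ∀ (n m l k : ℕ) (x : BStr) (t : ℕ),
      Bd (K * (n + 2)) (0, m, l, k, 0) → k ≤ l →
      2 ^ k ≤ ((LL (m, l) t).filter (fun u => decide (x ∈ u))).length →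
      ∃ S' : Finset BStr, x ∈ S' ∧ S'.card ≤ 2 ^ (l - k) ∧ C D (enc S') ≤ m + c * lam n := by
  let Q : P5 → ℕ → List BStr := fun a t => hv (2 ^ a.2.2.2.1) (LL (a.2.1, a.2.2.1) t).flatten
  have a1 : Computable (fun a : P5 => a.2.1) := Computable.fst.comp Computable.snd
  have a2 : Computable (fun a : P5 => a.2.2.1) :=
    Computable.fst.comp (Computable.snd.comp Computable.snd)
  have a3 : Computable (fun a : P5 => a.2.2.2.1) :=
    Computable.fst.comp (Computable.snd.comp (Computable.snd.comp Computable.snd))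
  have hL : Computable₂ (fun (a : P5) t => LL (a.2.1, a.2.2.1) t) :=
    hLL.comp ((a1.comp Computable.fst).pair (a2.comp Computable.fst)) Computable.snd
  have hQ : Computable₂ Q :=
    primrec_hv.to_comp.comp (primrec_pow2.to_comp.comp (a3.comp Computable.fst))
      (Primrec.list_flatten.to_comp.comp hL)
  have hc : Computable (fun a : P5 => 2 ^ (a.2.2.1 - a.2.2.2.1)) :=
    primrec_pow2.to_comp.comp (Primrec.nat_sub.to_comp.comp a2 a3)
  have hQ' : Computable (fun q : (P5 × ℕ) × ℕ => Q q.1.1 q.2) :=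
    hQ.comp (Computable.fst.comp Computable.fst) Computable.snd
  have hc' : Computable (fun q : (P5 × ℕ) × ℕ => 2 ^ (q.1.1.2.2.1 - q.1.1.2.2.2.1)) :=
    hc.comp (Computable.fst.comp Computable.fst)
  have hi' : Computable (fun q : (P5 × ℕ) × ℕ => q.1.2) := Computable.snd.comp Computable.fst
  let f1 : P5 × ℕ → ℕ → Option BStr := fun q t =>
    bif decide ((q.2 + 1) * 2 ^ (q.1.2.2.1 - q.1.2.2.2.1) ≤ (Q q.1 t).length) then
      some (enc (blk (Q q.1 t).reverse (2 ^ (q.1.2.2.1 - q.1.2.2.2.1)) q.2).toFinset) else none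
  have hQl : Computable (fun q : (P5 × ℕ) × ℕ => (Q q.1.1 q.2).length) :=
    Computable.list_length.comp hQ'
  have hm : Computable (fun q : (P5 × ℕ) × ℕ =>
      (q.1.2 + 1) * 2 ^ (q.1.1.2.2.1 - q.1.1.2.2.2.1)) :=
    Primrec.nat_mul.to_comp.comp (Computable.succ.comp hi') hc'
  have hdv : Computable (fun q : (P5 × ℕ) × ℕ =>
      (Q q.1.1 q.2).length / 2 ^ (q.1.1.2.2.1 - q.1.1.2.2.2.1)) :=
    Primrec.nat_div.to_comp.comp hQl hc'
  have hLl : Computable (fun q : (P5 × ℕ) × ℕ => (LL (q.1.1.2.1, q.1.1.2.2.1) q.2).length) :=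
    Computable.list_length.comp (hL.comp (Computable.fst.comp Computable.fst) Computable.snd)
  have hf1 : Computable₂ f1 := comp_blk henc (comp_le hm hQl) hQ' hc' hi'
  let f2 : P5 × ℕ → ℕ → Option BStr := fun q t =>
    bif decide ((LL (q.1.2.1, q.1.2.2.1) t).length = q.2) then
      some (enc (blk (Q q.1 t).reverse (2 ^ (q.1.2.2.1 - q.1.2.2.2.1))
        ((Q q.1 t).length / 2 ^ (q.1.2.2.1 - q.1.2.2.2.1))).toFinset) else none
  have hf2 : Computable₂ f2 := comp_blk henc (comp_eq hLl hi') hQ' hc' hdv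
  obtain ⟨c1, h1⟩ := gen_C hD (fun a i => Nat.rfindOpt (f1 (a, i))) (Partrec.rfindOpt hf1) K
  obtain ⟨c2, h2⟩ := gen_C hD (fun a i => Nat.rfindOpt (f2 (a, i))) (Partrec.rfindOpt hf2) K
  refine ⟨c1 + c2 + 1, fun n m l k x t hB hkl hN => ?_⟩
  have hl := lam_pos n
  have hlam : c1 * lam n + c2 * lam n + lam n = (c1 + c2 + 1) * lam n := by ring
  have hp1 : (1 : ℕ) ≤ 2 ^ k := Nat.one_le_two_pow
  have hxQ : x ∈ Q (0, m, l, k, 0) t := by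
    refine (mem_hv hp1 x _).2 (hN.trans ?_)
    exact @filt_le_count BStr instBEqOfDecidableEq _ x (LL (m, l) t) _
  obtain ⟨r, hr, hr'⟩ := mem_get hxQ
  set c := 2 ^ (l - k) with hcdef
  have hcpos : 0 < c := by positivity
  have hQlen : (Q (0, m, l, k, 0) t).length ≤ 2 ^ m * c := by
    have e1 := hv_length hp1 (LL (m, l) t).flatten
    have e2 : (LL (m, l) t).flatten.length ≤ (LL (m, l) t).length * 2 ^ l := by
      have := hcard (m, l) t
      revert this
      generalize LL (m, l) t = M
      clear * -
      intro h
      induction M with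
      | nil => simp
      | cons v M ih =>
        have e1 := h v (by simp)
        have e2 := ih (fun u hu => h u (by simp [hu]))
        rw [List.flatten_cons, List.length_append, List.length_cons, Nat.add_mul]
        simp only at e1
        omega
    have e3 : (LL (m, l) t).length * 2 ^ l ≤ 2 ^ m * 2 ^ l := Nat.mul_le_mul_right _ (hlen (m, l) t)
    have e4 : 2 ^ m * 2 ^ l = 2 ^ m * c * 2 ^ k := by
      rw [hcdef, mul_assoc, ← pow_add 2 (l - k) k, Nat.sub_add_cancel hkl]
    rw [e4] at e3
    exact Nat.le_of_mul_le_mul_right (e1.trans (e2.trans e3)) (by positivity)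
  by_cases hcase : (r / c + 1) * c ≤ (Q (0, m, l, k, 0) t).length
  · have hdom : (Nat.rfindOpt (f1 ((0, m, l, k, 0), r / c))).Dom := by
      refine Nat.rfindOpt_dom.2 ⟨t, enc (blk (Q (0, m, l, k, 0) t).reverse c (r / c)).toFinset, ?_⟩
      simp only [f1, Option.mem_def]
      rw [← hcdef]
      simp [hcase]
    obtain ⟨w, hw⟩ := Part.dom_iff_mem.1 hdom
    obtain ⟨s, hs⟩ := Nat.rfindOpt_spec hw
    have hs2 : (r / c + 1) * c ≤ (Q (0, m, l, k, 0) s).length ∧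
      enc (blk (Q (0, m, l, k, 0) s).reverse c (r / c)).toFinset
        = w := by
      by_cases hh : (r / c + 1) * c ≤ (Q (0, m, l, k, 0) s).length
      · refine ⟨hh, ?_⟩
        simp only [f1, Option.mem_def] at hs
        rw [← hcdef] at hs
        simpa [hh] using hs
      · exfalso
        simp only [f1, Option.mem_def] at hs
        rw [← hcdef] at hs
        simp [hh] at hs
    have hb := h1 n (0, m, l, k, 0) (r / c) m _ hB (by
      rw [Nat.div_lt_iff_lt_mul hcpos]
      omega) hw
    rw [← hs2.2] at hb
    refine ⟨_, ?_, blk_card _ c (r / c), hb.trans (by omega)⟩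
    rw [List.mem_toFinset]
    refine mem_blk hcpos ?_
    rcases le_total t s with hts | hts
    · exact suffix_get (hv_suffix _ (hsuf (m, l) t s hts).flatten) hr'
    · have hlt : r < (Q (0, m, l, k, 0) s).reverse.length := by
        rw [List.length_reverse]
        exact ((Nat.div_lt_iff_lt_mul hcpos).1 (Nat.lt_succ_self (r / c))).trans_le hs2.1
      have h3 := suffix_get (i := r) (hv_suffix (2 ^ k) (hsuf (m, l) s t hts).flatten)
        (List.getElem?_eq_getElem hlt)
      have h4 := hr'.symm.trans h3
      rw [List.getElem?_eq_getElem hlt]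
      exact h4.symm
  · have hq : (Q (0, m, l, k, 0) t).length / c = r / c := by
      apply le_antisymm
      · rw [← Nat.lt_succ_iff, Nat.div_lt_iff_lt_mul hcpos]
        exact not_le.1 hcase
      · exact Nat.div_le_div_right hr.le
    have hdom : (Nat.rfindOpt (f2 ((0, m, l, k, 0), (LL (m, l) t).length))).Dom := by
      refine Nat.rfindOpt_dom.2 ⟨t, enc (blk (Q (0, m, l, k, 0) t).reverse c
        ((Q (0, m, l, k, 0) t).length / c)).toFinset, ?_⟩
      simp only [f2, Option.mem_def]
      rw [← hcdef]
      simp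
    obtain ⟨w, hw⟩ := Part.dom_iff_mem.1 hdom
    obtain ⟨s, hs⟩ := Nat.rfindOpt_spec hw
    have hs2 : (LL (m, l) s).length = (LL (m, l) t).length ∧
      enc (blk (Q (0, m, l, k, 0) s).reverse c ((Q (0, m, l, k, 0) s).length / c)).toFinset
        = w := by
      by_cases hh : (LL (m, l) s).length = (LL (m, l) t).length
      · refine ⟨hh, ?_⟩
        simp only [f2, Option.mem_def] at hs
        rw [← hcdef] at hs
        simpa [hh] using hs
      · exfalso
        simp only [f2, Option.mem_def] at hs
        rw [← hcdef] at hs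
        simp [hh] at hs
    have hLs : LL (m, l) s = LL (m, l) t := by
      rcases le_total t s with hts | hts
      · exact ((hsuf (m, l) t s hts).eq_of_length hs2.1.symm).symm
      · exact (hsuf (m, l) s t hts).eq_of_length hs2.1
    have hQs : Q (0, m, l, k, 0) s = Q (0, m, l, k, 0) t := by
      simp only [Q, hLs]
    have hb := h2 n (0, m, l, k, 0) (LL (m, l) t).length (m + 1) _ hB (by
      refine (hlen (m, l) t).trans_lt ?_
      simp only
      rw [pow_succ]
      have : 0 < 2 ^ m := by positivity
      omega) hw
    rw [← hs2.2, hQs, hq] at hb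
    refine ⟨_, ?_, blk_card _ c (r / c), hb.trans (by omega)⟩
    rw [List.mem_toFinset]
    exact mem_blk hcpos hr'

theorem lemC {E : BStr → BStr →. BStr} (hE : OptimalCDM E)
    {enc : Finset BStr → BStr} (henc : SetEncoding enc) :
    ∃ c : ℕ, ∀ (n l : ℕ) (x : BStr) (S : Finset BStr), l ≤ n → x ∈ S → S.card ≤ 2 ^ l →
      Ccond E x (enc S) ≤ l + c * lam n := by
  have hF : Partrec₂ (fun (a : P5 × ℕ) (z : BStr) =>
      (invL enc a.1.2.1 z).bind (fun v => ((v[a.2]? : Option BStr) : Part BStr))) := by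
    refine Partrec.bind (f := fun q : (P5 × ℕ) × BStr => invL enc q.1.1.2.1 q.2)
      (g := fun q v => ((v[q.1.2]? : Option BStr) : Part BStr)) ?_ ?_
    · exact (partrec_invL henc).comp
        (Computable.fst.comp (Computable.snd.comp (Computable.fst.comp Computable.fst)))
        Computable.snd
    · exact Computable.ofOption (Computable.list_getElem?.comp Computable.snd
        (Computable.snd.comp (Computable.fst.comp Computable.fst)))
  obtain ⟨c, hc⟩ := gen_Ccond hE _ hF 1
  refine ⟨c, fun n l x S hl hx hS => ?_⟩
  obtain ⟨v, hv, hv1, hv2⟩ := invL_dom henc hS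
  have hxv : x ∈ v := by rw [← List.mem_toFinset, hv2]; exact hx
  obtain ⟨i, hi⟩ := List.mem_iff_getElem?.1 hxv
  have hi' : i < v.length := (List.getElem?_eq_some_iff.1 hi).1
  refine hc n (0, l, 0, 0, 0) i l x (enc S) ?_ (hi'.trans_le hv1) ?_
  · refine ⟨?_, ?_, ?_, ?_, ?_⟩ <;> simp only <;> omega
  · refine Part.mem_bind_iff.2 ⟨v, hv, ?_⟩
    simp only [hi]
    exact Part.mem_some _

theorem lemD {D : BStr →. BStr} (hD : OptimalDM D)
    {enc : Finset BStr → BStr} (henc : SetEncoding enc) :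
    ∃ c : ℕ, ∀ x : BStr, C D (enc {x}) ≤ C D x + c := by
  have h1 : Computable (fun y : BStr => enc [y].toFinset) :=
    Computable.comp (f := fun l : List BStr => enc l.toFinset) (g := fun y : BStr => [y]) henc.2
      (Computable.list_cons.comp Computable.id (Computable.const []))
  obtain ⟨c, hc⟩ := C_le_of hD (D' := fun p => (D p).map (fun y => enc [y].toFinset))
    (Partrec.map hD.1 (h1.comp Computable.snd))
  refine ⟨c, fun x => ?_⟩
  obtain ⟨p, hp, hp'⟩ := exists_prog hD x
  rw [← hp]
  refine hc _ p ?_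
  have := Part.mem_map (fun y : BStr => enc [y].toFinset) hp'
  simpa using this

theorem main_nat {D : BStr →. BStr} (hD : OptimalDM D) {E : BStr → BStr →. BStr}
    (hE : OptimalCDM E) {enc : Finset BStr → BStr} (henc : SetEncoding enc) :
    ∃ c : ℕ, ∀ (n l : ℕ) (x : BStr) (S : Finset BStr), x.length = n → x ∈ S →
      C D (enc S) ≤ n → l ≤ n → S.card ≤ 2 ^ l →
      ∃ (S' : Finset BStr) (j : ℕ), x ∈ S' ∧ S'.card ≤ 2 ^ j ∧
        C D (enc S') ≤ C D (enc S) + c * lam n ∧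
        C D (enc S') + j + Ccond E x (enc S) ≤ C D x + l + c * lam n := by
  obtain ⟨LL, hLL, hsuf, hlen, hcard, hex⟩ := exists_LL hD henc
  obtain ⟨c0, h0⟩ := C_le_of hD (D' := fun p => Part.some p) Partrec.some
  obtain ⟨cA, hA⟩ := lemA hD henc LL hLL hsuf hlen hcard (c0 + 2)
  obtain ⟨cB, hB⟩ := lemB hD hE henc LL hLL hsuf (c0 + 2)
  obtain ⟨cC, hC⟩ := lemC hE henc
  obtain ⟨cD, hDD⟩ := lemD hD henc
  refine ⟨cA + cB + cC + cD + 1, fun n l x S hxn hxS hm hl hS => ?_⟩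
  have hlam := lam_pos n
  have hsum : cA * lam n + cB * lam n + cC * lam n + cD * lam n + lam n
    = (cA + cB + cC + cD + 1) * lam n := by ring
  have hD1 : cD ≤ cD * lam n := Nat.le_mul_of_pos_right _ hlam
  have hq : C D x ≤ n + c0 := by
    have := h0 x x (Part.mem_some _)
    omega
  obtain ⟨t, v, hv, hvS⟩ := hex S l hS
  have hxv : x ∈ v := by rw [← List.mem_toFinset, hvS]; exact hxS
  generalize hmd : C D (enc S) = m at *
  generalize hNd : ((LL (m, l) t).filter (fun u => decide (x ∈ u))).length = N
  have hN1 : N ≠ 0 := by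
    rw [← hNd]
    intro h
    have := List.length_eq_zero_iff.1 h
    have h2 : v ∈ (LL (m, l) t).filter (fun u => decide (x ∈ u)) := by
      rw [List.mem_filter]
      exact ⟨hv, by simpa using hxv⟩
    rw [this] at h2
    simp at h2
  have hN2 : N ≤ 2 ^ m := by
    rw [← hNd]
    exact (List.length_filter_le _ _).trans (hlen (m, l) t)
  have hk1 : 2 ^ Nat.log 2 N ≤ N := Nat.pow_log_le_self 2 hN1
  have hk2 : N < 2 ^ (Nat.log 2 N + 1) := Nat.lt_pow_succ_log_self (by norm_num) N
  generalize Nat.log 2 N = k at hk1 hk2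
  have hkm : k ≤ m := (Nat.pow_le_pow_iff_right (by norm_num)).1 (hk1.trans hN2)
  have hBB : c0 + 2 * n + 2 ≤ (c0 + 2) * (n + 2) := by nlinarith
  have b := hB n m l (k + 1) x t v
    (by refine ⟨?_, ?_, ?_, ?_, ?_⟩ <;> simp only <;> omega) hv hxv (by rw [hNd]; exact hk2.le)
  rw [hvS, hmd] at b
  rcases le_total k l with hkl | hkl
  · obtain ⟨S', h1, h2, h3⟩ := hA n m l k x t
      (by refine ⟨?_, ?_, ?_, ?_, ?_⟩ <;> simp only <;> omega) hkl (by rw [hNd]; exact hk1)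
    exact ⟨S', l - k, h1, h2, by omega, by omega⟩
  · obtain ⟨S', h1, h2, h3⟩ := hA n m l l x t
      (by refine ⟨?_, ?_, ?_, ?_, ?_⟩ <;> simp only <;> omega) le_rfl
      (by rw [hNd]; exact (Nat.pow_le_pow_right (by norm_num) hkl).trans hk1)
    have hS' : S' = {x} := by
      rw [Nat.sub_self, pow_zero] at h2
      exact Finset.eq_singleton_iff_unique_mem.2
        ⟨h1, fun y hy => Finset.card_le_one.1 h2 y hy x h1⟩
    have d := hDD x
    have e := hC n l x S hl hxS hS
    rw [← hS'] at d
    exact ⟨S', 0, h1, by simpa using h2, by omega, by omega⟩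

end Helpers

/-- **Vereshchagin–Vitányi.** Every good statistical model in the
randomness-deficiency sense can be converted into one of essentially the same
complexity that is good in the optimality-deficiency sense. -/
theorem stmt0 (D : BStr →. BStr) (hD : OptimalDM D)
    (E : BStr → BStr →. BStr) (hE : OptimalCDM E)
    (enc : Finset BStr → BStr) (henc : SetEncoding enc) :
    ∃ c : ℝ, ∀ n : ℕ, ∀ x : BStr, x.length = n →
      ∀ S : Finset BStr, x ∈ S → C D (enc S) ≤ n → S.card ≤ 2 ^ n →
      ∃ S' : Finset BStr, x ∈ S' ∧
        (C D (enc S') : ℝ) ≤ (C D (enc S) : ℝ) + c * Real.logb 2 ((n : ℝ) + 2) ∧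
        (C D (enc S') : ℝ) + Real.logb 2 (S'.card : ℝ) - (C D x : ℝ) ≤
          (Real.logb 2 (S.card : ℝ) - (Ccond E x (enc S) : ℝ))
            + c * Real.logb 2 ((n : ℝ) + 2) := by
  obtain ⟨c, hc⟩ := main_nat hD hE henc
  refine ⟨(c : ℝ) + 1, fun n x hx S hxS hm hcard => ?_⟩
  have hS0 : S.card ≠ 0 := Finset.card_ne_zero_of_mem hxS
  have hl1 : S.card ≤ 2 ^ Nat.clog 2 S.card := Nat.le_pow_clog (by norm_num) _
  have hl2 : Nat.clog 2 S.card ≤ n := Nat.clog_le_of_le_pow hcard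
  have hl3 : (Nat.clog 2 S.card : ℝ) ≤ Real.logb 2 (S.card : ℝ) + 1 := by
    have hpos : (0 : ℝ) < S.card := by exact_mod_cast Nat.pos_of_ne_zero hS0
    rcases Nat.eq_zero_or_pos (Nat.clog 2 S.card) with h | h
    · rw [h]
      have : 0 ≤ Real.logb 2 (S.card : ℝ) :=
        Real.logb_nonneg (by norm_num) (by exact_mod_cast Nat.pos_of_ne_zero hS0)
      push_cast
      linarith
    · have h4 : 2 ^ (Nat.clog 2 S.card - 1) < S.card := by
        by_contra hcon
        have := Nat.clog_le_of_le_pow (not_lt.1 hcon)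
        omega
      have h5 : ((Nat.clog 2 S.card - 1 : ℕ) : ℝ) ≤ Real.logb 2 (S.card : ℝ) := by
        rw [Real.le_logb_iff_rpow_le (by norm_num) hpos, Real.rpow_natCast]
        exact_mod_cast h4.le
      rw [Nat.cast_sub h] at h5
      push_cast at h5
      linarith
  obtain ⟨S', j, h1, h2, h3, h4⟩ := hc n _ x S hx hxS hm hl2 hl1
  have hlam : (lam n : ℝ) ≤ Real.logb 2 ((n : ℝ) + 2) := by
    have hn : (0 : ℝ) < (n : ℝ) + 2 := by positivity
    rw [Real.le_logb_iff_rpow_le (by norm_num) hn, Real.rpow_natCast]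
    exact_mod_cast Nat.pow_log_le_self 2 (show n + 2 ≠ 0 by omega)
  have hlam1 : (1 : ℝ) ≤ lam n := by exact_mod_cast lam_pos n
  have hj : Real.logb 2 (S'.card : ℝ) ≤ j := by
    have hpos : (0 : ℝ) < S'.card := by
      exact_mod_cast Nat.pos_of_ne_zero (Finset.card_ne_zero_of_mem h1)
    rw [Real.logb_le_iff_le_rpow (by norm_num) hpos, Real.rpow_natCast]
    exact_mod_cast h2
  have hcl : (c : ℝ) * lam n ≤ c * Real.logb 2 ((n : ℝ) + 2) :=
    mul_le_mul_of_nonneg_left hlam (Nat.cast_nonneg c)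
  have h3' : (C D (enc S') : ℝ) ≤ C D (enc S) + c * lam n := by exact_mod_cast h3
  have h4' : (C D (enc S') : ℝ) + j + Ccond E x (enc S)
      ≤ C D x + Nat.clog 2 S.card + c * lam n := by exact_mod_cast h4
  refine ⟨S', h1, ?_, ?_⟩
  · linarith
  · linarith
end

section
/- There exists a constant c such that for every natural number n, every binary string x of length n, and every natural number k with c·log(n+2) ≤ k ≤ n, there exists a finite nonempty set S of binary strings with x ∈ S, C(S) ≤ k + c·log(n+2), and C(S) + log|S| ≤ C^{B(k)}(x) + c·log(n+2). (A program for x that halts within time B(k) can be converted into a two-part description based on a model of complexity at most k + O(log n) with essentially the same total length.) -/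
open scoped Classical

namespace KProof

/-- Value of a list of bits, least significant first. -/
def val (l : BStr) : ℕ := l.foldr (fun b s => Nat.bit b s) 0

theorem val_bits (m : ℕ) : val (Nat.bits m) = m := by
  induction m using Nat.binaryRec' with
  | zero => simp [val]
  | bit b n h ih =>
    rw [Nat.bits_append_bit n b h]
    simp only [val, List.foldr_cons] at ih ⊢
    rw [ih]

theorem exists_val (h : ℕ) : ∀ a, a < 2 ^ h → ∃ u : BStr, u.length = h ∧ val u = a := by
  induction h with
  | zero => intro a ha; exact ⟨[], rfl, by simp at ha; simp [val, ha]⟩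
  | succ h ih =>
    intro a ha
    obtain ⟨u, hu, hv⟩ := ih (a / 2) (by rw [pow_succ] at ha; omega)
    refine ⟨a.bodd :: u, by simp [hu], ?_⟩
    simp only [val, List.foldr_cons] at hv ⊢
    rw [hv, ← Nat.div2_val, Nat.bit_bodd_div2]

theorem primrec_val : Primrec val := by
  refine Primrec.list_foldr (h := fun (_ : BStr) (p : Bool × ℕ) => Nat.bit p.1 p.2)
    Primrec.id (Primrec.const 0) ?_
  have : Primrec (fun q : BStr × (Bool × ℕ) => 2 * q.2.2 + cond q.2.1 1 0) :=
    Primrec.nat_add.comp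
      (Primrec.nat_mul.comp (Primrec.const 2) (Primrec.snd.comp Primrec.snd))
      (Primrec.cond (Primrec.fst.comp Primrec.snd) (Primrec.const 1) (Primrec.const 0))
  exact this.of_eq fun q => by
    obtain ⟨_, b, s⟩ := q
    cases b <;> simp [Nat.bit_val]

theorem primrec_pow2 : Primrec (fun n : ℕ => 2 ^ n) := by
  have : Primrec (Nat.rec (motive := fun _ => ℕ) 1 (fun _ s => 2 * s)) :=
    Primrec.nat_rec₁ 1 (Primrec.nat_mul.comp (Primrec.const 2) Primrec.snd)
  exact this.of_eq fun n => by
    induction n with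
    | zero => rfl
    | succ n ih => simp only [ih, pow_succ]; ring

/-- All strings of length at most `n`. -/
def progs (n : ℕ) : List BStr :=
  Nat.rec (motive := fun _ => List BStr) [[]]
    (fun _ l => [] :: (l.map (fun x => false :: x) ++ l.map (fun x => true :: x))) n

theorem primrec_progs : Primrec progs := by
  refine Primrec.nat_rec₁ [[]] ?_
  have h (b : Bool) : Primrec (fun q : ℕ × List BStr => q.2.map (fun x => b :: x)) :=
    Primrec.list_map Primrec.snd (Primrec.list_cons.comp (Primrec.const b) Primrec.snd)
  exact Primrec.list_cons.comp (Primrec.const []) (Primrec.list_append.comp (h false) (h true))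

theorem mem_progs (n : ℕ) : ∀ x : BStr, x ∈ progs n ↔ x.length ≤ n := by
  induction n with
  | zero => intro x; simp [progs]
  | succ n ih =>
    intro x
    have : progs (n+1) = [] :: ((progs n).map (fun x => false :: x) ++
      (progs n).map (fun x => true :: x)) := rfl
    rw [this]
    rcases x with _ | ⟨b, x⟩
    · simp
    · cases b <;> simp [ih]

theorem length_progs (n : ℕ) : (progs n).length + 1 = 2 ^ (n + 1) := by
  induction n with
  | zero => simp [progs]
  | succ n ih =>
    have : progs (n+1) = [] :: ((progs n).map (fun x => false :: x) ++
      (progs n).map (fun x => true :: x)) := rfl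
    rw [this]
    simp only [List.length_cons, List.length_append, List.length_map]
    rw [pow_succ]; omega

/-- Decoding of a self-delimiting parameter followed by data. -/
def dec (p : BStr) : ℕ × BStr :=
  (val ((p.drop (p.idxOf false + 1)).take (p.idxOf false)),
    (p.drop (p.idxOf false + 1)).drop (p.idxOf false))

theorem primrec_dec : Primrec dec := by
  have hi : Primrec (fun p : BStr => p.idxOf false) :=
    Primrec.list_idxOf.comp (Primrec.const false) Primrec.id
  have hd : Primrec (fun p : BStr => p.drop (p.idxOf false + 1)) :=
    Primrec.list_drop.comp (Primrec.succ.comp hi) Primrec.id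
  exact (primrec_val.comp (Primrec.list_take.comp hi hd)).pair (Primrec.list_drop.comp hi hd)

theorem dec_spec (u r : BStr) :
    dec (List.replicate u.length true ++ false :: (u ++ r)) = (val u, r) := by
  have h : (List.replicate u.length true ++ false :: (u ++ r)).idxOf false = u.length := by
    rw [List.idxOf_append_of_notMem (by simp)]; simp
  have h2 : (List.replicate u.length true ++ false :: (u ++ r)).drop (u.length + 1) = u ++ r := by
    rw [show List.replicate u.length true ++ false :: (u ++ r)
      = (List.replicate u.length true ++ [false]) ++ (u ++ r) by simp]
    rw [List.drop_left' (by simp)]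
  simp only [dec, h, h2]
  simp

theorem Cw_le_of_mem {D : BStr →. BStr} {p x : BStr} (h : x ∈ D p) : Cw D x ≤ p.length :=
  iInf₂_le p h

theorem exists_prog {D : BStr →. BStr} {x : BStr} {N : ℕ} (h : Cw D x ≤ N) :
    ∃ p : BStr, x ∈ D p ∧ p.length ≤ N := by
  by_contra hc
  push Not at hc
  have : ((N + 1 : ℕ) : ℕ∞) ≤ Cw D x := by
    refine le_iInf₂ fun p hp => ?_
    exact_mod_cast hc p hp
  have := this.trans h
  norm_cast at this
  omega

theorem C_le {D : BStr →. BStr} {x : BStr} {N : ℕ} (h : Cw D x ≤ N) : C D x ≤ N := by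
  unfold C
  exact ENat.toNat_le_of_le_natCast h

theorem machine {D : BStr →. BStr} (hD : OptimalDM D) (F : ℕ × BStr →. BStr) (hF : Partrec F) :
    ∃ c : ℕ, ∀ (a h : ℕ) (r y : BStr), a < 2 ^ h → y ∈ F (a, r) →
      Cw D y ≤ ((r.length + 2 * h + 1 + c : ℕ) : ℕ∞) := by
  obtain ⟨c, hc⟩ := hD.2 (fun p => F (dec p)) (hF.comp primrec_dec.to_comp)
  refine ⟨c, fun a h r y ha hy => ?_⟩
  obtain ⟨u, hu, hv⟩ := exists_val h a ha
  refine (hc y).trans ?_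
  have : Cw (fun p => F (dec p)) y ≤
      ((List.replicate u.length true ++ false :: (u ++ r)).length : ℕ∞) := by
    apply Cw_le_of_mem
    show y ∈ F (dec _)
    rw [dec_spec, hv]; exact hy
  refine (add_le_add_left this _).trans ?_
  norm_cast
  simp [hu]
  omega

/-- Append if not present. -/
def ins (l : List BStr) (y : BStr) : List BStr :=
  if @List.idxOf BStr instBEqOfDecidableEq y l < l.length then l else l ++ [y]

theorem primrec_ins : Primrec₂ ins := by
  refine Primrec.ite (Primrec.nat_lt.comp (Primrec.list_idxOf.comp Primrec.snd Primrec.fst)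
    (Primrec.list_length.comp Primrec.fst)) Primrec.fst ?_
  exact Primrec.list_concat.comp Primrec.fst Primrec.snd

theorem mem_ins (l : List BStr) (y z : BStr) : z ∈ ins l y ↔ z ∈ l ∨ z = y := by
  unfold ins
  split_ifs with h
  · rw [@List.idxOf_lt_length_iff BStr instBEqOfDecidableEq] at h
    constructor
    · exact Or.inl
    · rintro (h' | rfl) <;> assumption
  · simp

theorem nodup_ins (l : List BStr) (y : BStr) (hl : l.Nodup) : (ins l y).Nodup := by
  unfold ins
  split_ifs with h
  · exact hl
  · rw [@List.idxOf_lt_length_iff BStr instBEqOfDecidableEq] at h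
    rw [List.nodup_append]
    refine ⟨hl, by simp, ?_⟩
    rintro a ha b hb rfl
    simp at hb
    exact h (hb ▸ ha)

theorem prefix_ins (l : List BStr) (y : BStr) : l <+: ins l y := by
  unfold ins
  split_ifs with h
  · exact List.prefix_refl _
  · exact List.prefix_append _ _

/-- Output found at step `i`. -/
def found (ev : ℕ → BStr → Option BStr) (l i : ℕ) : Option BStr :=
  ((progs l)[i.unpair.2]?).bind (ev i.unpair.1)

/-- Enumeration of strings of complexity at most `l`. -/
def enum (ev : ℕ → BStr → Option BStr) (l i : ℕ) : List BStr :=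
  Nat.rec (motive := fun _ => List BStr) []
    (fun i L => Option.casesOn (found ev l i) L (fun y => ins L y)) i

theorem computable_found {ev : ℕ → BStr → Option BStr} (h : Computable₂ ev) :
    Computable₂ (found ev) := by
  refine Computable.option_bind ?_ ?_
  · exact Computable.list_getElem?.comp (primrec_progs.to_comp.comp Computable.fst)
      (Computable.snd.comp (Computable.unpair.comp Computable.snd))
  · exact h.comp (Computable.fst.comp (Computable.unpair.comp
      (Computable.snd.comp Computable.fst))) Computable.snd

theorem computable_enum {ev : ℕ → BStr → Option BStr} (h : Computable₂ ev) :
    Computable₂ (enum ev) := by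
  refine Computable.nat_rec (f := fun q : ℕ × ℕ => q.2) (g := fun _ => [])
    (h := fun (q : ℕ × ℕ) (s : ℕ × List BStr) =>
      Option.casesOn (found ev q.1 s.1) s.2 (fun y => ins s.2 y))
    Computable.snd (Computable.const []) ?_
  refine Computable.option_casesOn ?_ ?_ ?_
  · exact (computable_found h).comp (Computable.fst.comp Computable.fst)
      (Computable.fst.comp Computable.snd)
  · exact Computable.snd.comp Computable.snd
  · exact primrec_ins.to_comp.comp (Computable.snd.comp (Computable.snd.comp Computable.fst))
      Computable.snd

theorem enum_succ (ev : ℕ → BStr → Option BStr) (l i : ℕ) :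
    enum ev l (i + 1) = Option.casesOn (found ev l i) (enum ev l i)
      (fun y => ins (enum ev l i) y) := rfl

theorem enum_nodup (ev : ℕ → BStr → Option BStr) (l i : ℕ) : (enum ev l i).Nodup := by
  induction i with
  | zero => simp [enum]
  | succ i ih =>
    rw [enum_succ]
    cases found ev l i with
    | none => exact ih
    | some y => exact nodup_ins _ _ ih

theorem enum_prefix (ev : ℕ → BStr → Option BStr) (l : ℕ) {i j : ℕ} (h : i ≤ j) :
    enum ev l i <+: enum ev l j := by
  induction j, h using Nat.le_induction with
  | base => exact List.prefix_refl _
  | succ j _ ih =>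
    refine ih.trans ?_
    rw [enum_succ]
    cases found ev l j with
    | none => exact List.prefix_refl _
    | some y => exact prefix_ins _ _

theorem enum_complete (ev : ℕ → BStr → Option BStr) (l t : ℕ) {p y : BStr} (hp : p.length ≤ l)
    (h : ev t p = some y) : y ∈ enum ev l (Nat.pair t (2 ^ (l + 1))) := by
  obtain ⟨a, ha, hb⟩ := List.getElem_of_mem ((mem_progs l p).2 hp)
  have hlt : a < 2 ^ (l + 1) := by have := length_progs l; omega
  have hf : found ev l (Nat.pair t a) = some y := by
    simp [found, List.getElem?_eq_getElem ha, hb, h]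
  have h1 : y ∈ enum ev l (Nat.pair t a + 1) := by
    rw [enum_succ, hf]
    exact (mem_ins _ _ _).2 (Or.inr rfl)
  exact (enum_prefix ev l (Nat.pair_lt_pair_right t hlt)).subset h1

theorem enum_sound (ev : ℕ → BStr → Option BStr) (l i : ℕ) :
    ∀ y ∈ enum ev l i, ∃ p ∈ progs l, ∃ t, ev t p = some y := by
  induction i with
  | zero => simp [enum]
  | succ i ih =>
    rw [enum_succ]
    intro y hy
    rcases hf : found ev l i with _ | z
    · rw [hf] at hy; exact ih y hy
    · rw [hf] at hy
      rcases (mem_ins _ _ _).1 hy with h | rfl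
      · exact ih y h
      · unfold found at hf
        rw [Option.bind_eq_some_iff] at hf
        obtain ⟨p, hp, he⟩ := hf
        exact ⟨p, List.mem_of_getElem? hp, _, he⟩

theorem enum_length {D : BStr →. BStr} (T : TimedDM D) (l i : ℕ) :
    (enum T.ev l i).length < 2 ^ (l + 1) := by
  have hs := enum_sound T.ev l i
  have h1 : (enum T.ev l i).toFinset.card = (enum T.ev l i).length :=
    List.toFinset_card_of_nodup (enum_nodup _ _ _)
  choose! f hf t ht using hs
  have h2 : (enum T.ev l i).toFinset.card ≤ (progs l).toFinset.card := by
    refine Finset.card_le_card_of_injOn f ?_ ?_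
    · intro y hy
      simp only [List.coe_toFinset, Set.mem_ofPred_eq] at hy ⊢
      exact hf y hy
    · intro y hy z hz hyz
      simp only [List.coe_toFinset, Set.mem_ofPred_eq] at hy hz
      have a := (T.spec _ _).2 ⟨_, ht y hy⟩
      have b := (T.spec _ _).2 ⟨_, ht z hz⟩
      rw [hyz] at a
      exact Part.mem_unique a b
  have h3 := List.toFinset_card_le (progs l)
  have := length_progs l
  omega

/-- Fresh string number `j` with respect to a list. -/
def fresh (L : List BStr) (j : ℕ) : BStr := L.flatten ++ (List.range (j + 1)).map (fun _ => true)

theorem primrec_fresh : Primrec₂ fresh := by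
  refine Primrec.list_append.comp (Primrec.list_flatten.comp Primrec.fst) ?_
  exact Primrec.list_map (Primrec.list_range.comp (Primrec.succ.comp Primrec.snd))
    (Primrec.const true).to₂

theorem fresh_length (L : List BStr) (j : ℕ) : (fresh L j).length = L.flatten.length + j + 1 := by
  simp only [fresh, List.length_append, List.length_map, List.length_range]; omega

theorem fresh_notMem (L : List BStr) (j : ℕ) : fresh L j ∉ L := by
  intro h
  have h1 := (List.sublist_flatten_of_mem h).length_le
  rw [fresh_length] at h1
  omega

theorem fresh_inj (L : List BStr) {i j : ℕ} (h : fresh L i = fresh L j) : i = j := by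
  have := congrArg List.length h
  simp only [fresh_length] at this
  omega

theorem bddAbove_B (D : BStr →. BStr) (k : ℕ) :
    BddAbove {m : ℕ | Cw D (Nat.bits m) ≤ (k : ℕ∞)} := by
  apply Set.Finite.bddAbove
  have key : ∀ m ∈ {m : ℕ | Cw D (Nat.bits m) ≤ (k : ℕ∞)}, ∃ p ∈ progs k, Nat.bits m ∈ D p := by
    intro m hm
    obtain ⟨p, hp, hl⟩ := exists_prog hm
    exact ⟨p, (mem_progs k p).2 hl, hp⟩
  choose! f hf hg using key
  refine Set.Finite.of_finite_image (f := f) ((progs k).toFinset.finite_toSet.subset ?_) ?_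
  · rintro _ ⟨m, hm, rfl⟩
    simpa using hf m hm
  · intro a ha b hb hab
    have h1 := hg a ha
    have h2 := hg b hb
    rw [hab] at h1
    have := congrArg val (Part.mem_unique h1 h2)
    simpa [val_bits] using this

/-- Machine producing fresh strings. -/
theorem machine_fresh {D : BStr →. BStr} (hD : OptimalDM D) (T : TimedDM D) :
    ∃ c : ℕ, ∀ (l e h m j : ℕ) (q : BStr), Nat.pair l e < 2 ^ h → j < 2 ^ e →
      Nat.bits m ∈ D q →
      Cw D (fresh (enum T.ev l (Nat.pair m (2 ^ (l + 1)))) j) ≤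
        ((e + q.length + 2 * h + 1 + c : ℕ) : ℕ∞) := by
  let G : (ℕ × BStr) → BStr → BStr := fun s o =>
    fresh (enum T.ev s.1.unpair.1 (Nat.pair (val o) (2 ^ (s.1.unpair.1 + 1))))
      (val (s.2.take s.1.unpair.2))
  let F : ℕ × BStr →. BStr := fun s => (D (s.2.drop s.1.unpair.2)).map (G s)
  have he : Computable (fun s : ℕ × BStr => s.1.unpair.2) :=
    Computable.snd.comp (Computable.unpair.comp Computable.fst)
  have hl : Computable (fun s : ℕ × BStr => s.1.unpair.1) :=
    Computable.fst.comp (Computable.unpair.comp Computable.fst)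
  have hG : Computable₂ G := by
    refine primrec_fresh.to_comp.comp ?_ ?_
    · refine (computable_enum T.computable).comp (hl.comp Computable.fst) ?_
      exact Primrec₂.natPair.to_comp.comp (primrec_val.to_comp.comp Computable.snd)
        (primrec_pow2.to_comp.comp (Computable.succ.comp (hl.comp Computable.fst)))
    · exact primrec_val.to_comp.comp (Primrec.list_take.to_comp.comp (he.comp Computable.fst)
        (Computable.snd.comp Computable.fst))
  have hF : Partrec F := by
    refine Partrec.map ?_ hG
    exact hD.1.comp (Primrec.list_drop.to_comp.comp he Computable.snd)
  obtain ⟨c, hc⟩ := machine hD F hF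
  refine ⟨c, fun l e h m j q hp hj hq => ?_⟩
  obtain ⟨u, hu, hv⟩ := exists_val e j hj
  have := hc (Nat.pair l e) h (u ++ q)
    (fresh (enum T.ev l (Nat.pair m (2 ^ (l + 1)))) j) hp ?_
  · simpa [hu] using this
  · refine (Part.mem_map_iff _).2 ⟨Nat.bits m, ?_, ?_⟩
    · simpa [hu.symm] using hq
    · simp [G, hu.symm, val_bits]
      rw [hv]

/-- Boolean comparison. -/
def leb (a b : ℕ) : Bool := decide (a ≤ b)

theorem computable_leb : Computable₂ leb := Primrec.nat_le.decide.to_comp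

/-- Machine producing portions of the enumeration. -/
theorem machine_portion {D : BStr →. BStr} (hD : OptimalDM D) (T : TimedDM D)
    (enc : Finset BStr → BStr) (henc : SetEncoding enc) :
    ∃ c : ℕ, ∀ (l e h j i b : ℕ), Nat.pair l e < 2 ^ h → j < 2 ^ b →
      (j + 1) * 2 ^ e ≤ (enum T.ev l i).length →
      Cw D (enc (((enum T.ev l i).drop (j * 2 ^ e)).take (2 ^ e)).toFinset) ≤
        ((b + 2 * h + 1 + c : ℕ) : ℕ∞) := by
  let G : (ℕ × BStr) → ℕ → List BStr := fun s i =>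
    ((enum T.ev s.1.unpair.1 i).drop (val s.2 * 2 ^ s.1.unpair.2)).take (2 ^ s.1.unpair.2)
  let P : (ℕ × BStr) → ℕ → Bool := fun s i =>
    leb ((val s.2 + 1) * 2 ^ s.1.unpair.2) (enum T.ev s.1.unpair.1 i).length
  let F : ℕ × BStr →. BStr := fun s =>
    (Nat.rfind (fun i => Part.some (P s i))).map (fun i => enc (G s i).toFinset)
  have hl : Computable (fun s : ℕ × BStr => s.1.unpair.1) :=
    Computable.fst.comp (Computable.unpair.comp Computable.fst)
  have he : Computable (fun s : ℕ × BStr => 2 ^ s.1.unpair.2) :=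
    primrec_pow2.to_comp.comp (Computable.snd.comp (Computable.unpair.comp Computable.fst))
  have hv : Computable (fun s : ℕ × BStr => val s.2) := primrec_val.to_comp.comp Computable.snd
  have hE : Computable (fun q : (ℕ × BStr) × ℕ => enum T.ev q.1.1.unpair.1 q.2) :=
    (computable_enum T.computable).comp (hl.comp Computable.fst) Computable.snd
  have hG : Computable (fun q : (ℕ × BStr) × ℕ => G q.1 q.2) := by
    refine Primrec.list_take.to_comp.comp (he.comp Computable.fst) ?_
    refine Primrec.list_drop.to_comp.comp ?_ hE
    exact Primrec.nat_mul.to_comp.comp (hv.comp Computable.fst) (he.comp Computable.fst)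
  have hn : Computable (fun q : (ℕ × BStr) × ℕ => (val q.1.2 + 1) * 2 ^ q.1.1.unpair.2) :=
    Primrec.nat_mul.to_comp.comp (Computable.succ.comp (hv.comp Computable.fst))
      (he.comp Computable.fst)
  have hP : Computable₂ P := computable_leb.comp hn (Computable.list_length.comp hE)
  have hF : Partrec F := by
    refine Partrec.map (Partrec.rfind hP.partrec₂) ?_
    exact henc.2.comp hG
  obtain ⟨c, hc⟩ := machine hD F hF
  refine ⟨c, fun l e h j i b hp hj hi => ?_⟩
  obtain ⟨u, hu, hvu⟩ := exists_val b j hj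
  have := hc (Nat.pair l e) h u
    (enc (((enum T.ev l i).drop (j * 2 ^ e)).take (2 ^ e)).toFinset) hp ?_
  · simpa [hu] using this
  · have hPi : P (Nat.pair l e, u) i = true := by simpa [P, hvu, leb] using hi
    obtain ⟨i', hi', hle'⟩ := Nat.rfind_min' (p := P (Nat.pair l e, u)) hPi
    refine (Part.mem_map_iff _).2 ⟨i', hi', ?_⟩
    have hs := Nat.rfind_spec hi'
    have hs' : (j + 1) * 2 ^ e ≤ (enum T.ev l i').length := by simpa [P, hvu, leb] using hs
    simp only [G, Nat.unpair_pair, hvu]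
    obtain ⟨R, hR⟩ := enum_prefix T.ev l hle'
    rw [← hR]
    have h1 : j * 2 ^ e + 2 ^ e ≤ (enum T.ev l i').length := by linarith
    rw [List.drop_append_of_le_length ((Nat.le_add_right _ _).trans h1),
      List.take_append_of_le_length (by rw [List.length_drop]; omega)]

theorem machine_single {D : BStr →. BStr} (hD : OptimalDM D)
    (enc : Finset BStr → BStr) (henc : SetEncoding enc) :
    ∃ c : ℕ, ∀ q x : BStr, x ∈ D q → Cw D (enc {x}) ≤ ((q.length + c : ℕ) : ℕ∞) := by
  let F : ℕ × BStr →. BStr := fun s => (D s.2).map (fun x => enc [x].toFinset)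
  have hF : Partrec F := by
    refine Partrec.map (hD.1.comp Computable.snd) ?_
    exact henc.2.comp (Computable.list_cons.comp Computable.snd (Computable.const []))
  obtain ⟨c, hc⟩ := machine hD F hF
  refine ⟨1 + c, fun q x hx => ?_⟩
  have := hc 0 0 q (enc {x}) (by simp) ((Part.mem_map_iff _).2 ⟨x, hx, by simp⟩)
  simpa [add_assoc] using this

theorem machine_all {D : BStr →. BStr} (hD : OptimalDM D)
    (enc : Finset BStr → BStr) (henc : SetEncoding enc) :
    ∃ c : ℕ, ∀ n h : ℕ, n < 2 ^ h →
      Cw D (enc (progs n).toFinset) ≤ ((2 * h + 1 + c : ℕ) : ℕ∞) := by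
  let F : ℕ × BStr →. BStr := fun s => Part.some (enc (progs s.1).toFinset)
  have hF : Partrec F := (henc.2.comp (primrec_progs.to_comp.comp Computable.fst)).partrec
  obtain ⟨c, hc⟩ := machine hD F hF
  refine ⟨c, fun n h hn => ?_⟩
  have := hc n h [] (enc (progs n).toFinset) hn (Part.mem_some _)
  simpa using this

theorem exists_const {D : BStr →. BStr} (hD : OptimalDM D) :
    ∃ c : ℕ, Cw D (Nat.bits 0) ≤ (c : ℕ∞) := by
  obtain ⟨c, hc⟩ := machine hD (fun s => Part.some s.2) Computable.snd.partrec
  exact ⟨_, hc 0 0 (Nat.bits 0) (Nat.bits 0) (by simp) (Part.mem_some _)⟩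

theorem exists_portion {D : BStr →. BStr} (T : TimedDM D) (l e m : ℕ) (x p : BStr)
    (hp : p.length ≤ l) (hx : T.ev m p = some x)
    (hfr : ∀ j < 2 ^ e, Cw D (fresh (enum T.ev l (Nat.pair m (2 ^ (l + 1)))) j) ≤ (l : ℕ∞)) :
    ∃ j i, (j + 1) * 2 ^ e ≤ (enum T.ev l i).length ∧
      x ∈ ((enum T.ev l i).drop (j * 2 ^ e)).take (2 ^ e) := by
  set i₀ := Nat.pair m (2 ^ (l + 1)) with hi₀
  set L := enum T.ev l i₀ with hL
  have hxL : x ∈ L := enum_complete T.ev l m hp hx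
  -- every fresh string appears at some stage
  have hst : ∀ j < 2 ^ e, ∃ i, fresh L j ∈ enum T.ev l i := by
    intro j hj
    obtain ⟨q, hq, hql⟩ := exists_prog (hfr j hj)
    obtain ⟨t, ht⟩ := (T.spec _ _).1 hq
    exact ⟨_, enum_complete T.ev l t hql ht⟩
  choose! f hf using hst
  obtain ⟨I, hI⟩ : ∃ I, i₀ ≤ I ∧ ∀ j < 2 ^ e, f j ≤ I := by
    refine ⟨max i₀ ((Finset.range (2 ^ e)).sup f), le_max_left _ _, fun j hj => ?_⟩
    exact (Finset.le_sup (f := f) (Finset.mem_range.2 hj)).trans (le_max_right _ _)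
  have hlen : L.length + 2 ^ e ≤ (enum T.ev l I).length := by
    have hsub : L ++ (List.range (2 ^ e)).map (fresh L) ⊆ enum T.ev l I := by
      intro y hy
      rcases List.mem_append.1 hy with h | h
      · exact (enum_prefix T.ev l hI.1).subset h
      · obtain ⟨j, hj, rfl⟩ := List.mem_map.1 h
        have hj' := List.mem_range.1 hj
        exact (enum_prefix T.ev l (hI.2 j hj')).subset (hf j hj')
    have hnd : (L ++ (List.range (2 ^ e)).map (fresh L)).Nodup := by
      rw [List.nodup_append]
      refine ⟨enum_nodup _ _ _, ?_, ?_⟩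
      · exact List.Nodup.map (fun a b h => fresh_inj L h) List.nodup_range
      · rintro a ha b hb rfl
        obtain ⟨j, _, rfl⟩ := List.mem_map.1 hb
        exact fresh_notMem L j ha
    have := (List.Nodup.subperm hnd hsub).length_le
    simpa using this
  obtain ⟨a, ha, hax⟩ := List.getElem_of_mem hxL
  have hpos : 0 < 2 ^ e := by positivity
  refine ⟨a / 2 ^ e, I, ?_, ?_⟩
  · have := Nat.div_mul_le_self a (2 ^ e)
    rw [Nat.add_mul, one_mul]
    omega
  · have h1 : (enum T.ev l I)[a]? = some x := by
      obtain ⟨R, hR⟩ := enum_prefix T.ev l hI.1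
      rw [← hR, List.getElem?_append_left ha, List.getElem?_eq_getElem ha, hax]
    have h2 : a % 2 ^ e < 2 ^ e := Nat.mod_lt _ hpos
    have h3 : a / 2 ^ e * 2 ^ e + a % 2 ^ e = a := Nat.div_add_mod' a (2 ^ e)
    apply List.mem_of_getElem? (i := a % 2 ^ e)
    rw [List.getElem?_take_of_lt h2, List.getElem?_drop, h3, h1]

theorem main_nat (D : BStr →. BStr) (hD : OptimalDM D) (T : TimedDM D)
    (enc : Finset BStr → BStr) (henc : SetEncoding enc) :
    ∃ c : ℕ, 0 < c ∧ ∀ n : ℕ, ∀ x : BStr, x.length = n → ∀ k w : ℕ,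
      1 ≤ w → n + 2 < 2 ^ (w + 1) → c ≤ k →
      ∃ (S : Finset BStr) (s : ℕ), x ∈ S ∧ S.card ≤ 2 ^ s ∧ C D (enc S) ≤ k + c * w ∧
        ∀ p : BStr, T.ev (B D k) p = some x → C D (enc S) + s ≤ p.length + c * w := by
  obtain ⟨c0, h0⟩ := exists_const hD
  obtain ⟨c1, h1⟩ := machine_fresh hD T
  obtain ⟨c2, h2⟩ := machine_portion hD T enc henc
  obtain ⟨c3, h3⟩ := machine_single hD enc henc
  obtain ⟨c4, h4⟩ := machine_all hD enc henc
  refine ⟨c0 + c1 + c2 + c3 + c4 + 20, by omega, ?_⟩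
  intro n x hxn k w hw hnw hk
  have e0 : c0 ≤ c0 * w := Nat.le_mul_of_pos_right _ hw
  have e1 : c1 ≤ c1 * w := Nat.le_mul_of_pos_right _ hw
  have e2 : c2 ≤ c2 * w := Nat.le_mul_of_pos_right _ hw
  have e3 : c3 ≤ c3 * w := Nat.le_mul_of_pos_right _ hw
  have e4 : c4 ≤ c4 * w := Nat.le_mul_of_pos_right _ hw
  have ec : (c0 + c1 + c2 + c3 + c4 + 20) * w
      = c0 * w + c1 * w + c2 * w + c3 * w + c4 * w + 20 * w := by ring
  rw [ec]
  by_cases hex : ∃ l, l ≤ n ∧ ∃ p : BStr, p.length = l ∧ T.ev (B D k) p = some x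
  · classical
    let l := Nat.find hex
    obtain ⟨hln, p, hpl, hp⟩ := Nat.find_spec hex
    have hmin : ∀ q : BStr, T.ev (B D k) q = some x → l ≤ q.length := by
      intro q hq
      by_cases hqn : q.length ≤ n
      · exact Nat.find_min' hex ⟨hqn, q, rfl, hq⟩
      · have : l ≤ n := hln
        omega
    change l ≤ n at hln
    change p.length = l at hpl
    have hxD : x ∈ D p := (T.spec _ _).2 ⟨_, hp⟩
    by_cases hlk : l ≤ k + (9 + c1) * w
    · refine ⟨{x}, 0, by simp, by simp, ?_, fun q hq => ?_⟩
      · have := C_le (h3 p x hxD)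
        have : (9 + c1) * w = 9 * w + c1 * w := by ring
        omega
      · have := C_le (h3 p x hxD)
        have := hmin q hq
        omega
    · obtain ⟨e, he⟩ : ∃ e, l = k + (9 + c1) * w + e := ⟨l - (k + (9 + c1) * w), by omega⟩
      have hm : B D k ∈ {m : ℕ | Cw D (Nat.bits m) ≤ (k : ℕ∞)} := by
        refine Nat.sSup_mem ⟨0, ?_⟩ (bddAbove_B D k)
        refine h0.trans ?_
        exact_mod_cast (by omega : c0 ≤ k)
      obtain ⟨q, hq, hqk⟩ := exists_prog hm
      have hh : Nat.pair l e < 2 ^ (2 * (w + 1)) := by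
        have a1 := Nat.pair_lt_max_add_one_sq l e
        have a2 : max l e + 1 ≤ 2 ^ (w + 1) := by
          have : max l e ≤ n := max_le hln (by omega)
          omega
        calc Nat.pair l e < (max l e + 1) ^ 2 := a1
          _ ≤ (2 ^ (w + 1)) ^ 2 := Nat.pow_le_pow_left a2 2
          _ = 2 ^ (2 * (w + 1)) := by rw [← pow_mul, mul_comm]
      have hd : (9 + c1) * w = 9 * w + c1 * w := by ring
      obtain ⟨j, i, hji, hxS⟩ := exists_portion T l e (B D k) x p hpl.le hp (by
        intro j hj
        refine (h1 l e (2 * (w + 1)) (B D k) j q hh hj hq).trans ?_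
        exact_mod_cast (by omega : e + q.length + 2 * (2 * (w + 1)) + 1 + c1 ≤ l))
      have hjb : j < 2 ^ (k + (9 + c1) * w + 1) := by
        have a1 := enum_length T l i
        have a2 : (j + 1) * 2 ^ e < 2 ^ (k + (9 + c1) * w + 1) * 2 ^ e := by
          rw [← pow_add]
          refine (hji.trans_lt a1).trans_le (le_of_eq ?_)
          congr 1; omega
        have := lt_of_mul_lt_mul_right a2 (Nat.zero_le _)
        omega
      have hC := C_le (h2 l e (2 * (w + 1)) j i _ hh hjb hji)
      refine ⟨_, e, List.mem_toFinset.2 hxS, ?_, hC.trans ?_, fun r hr => ?_⟩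
      · exact (List.toFinset_card_le _).trans (by simp)
      · omega
      · have := hmin r hr
        omega
  · have hn : n < 2 ^ (w + 1) := by omega
    have hC := C_le (h4 n (w + 1) hn)
    refine ⟨(progs n).toFinset, n + 1, ?_, ?_, ?_, fun q hq => ?_⟩
    · exact List.mem_toFinset.2 ((mem_progs n x).2 hxn.le)
    · have := List.toFinset_card_le (progs n)
      have := length_progs n
      omega
    · omega
    · have : ¬ q.length ≤ n := fun h => hex ⟨_, h, q, rfl, hq⟩
      omega

end KProof

/-- A program for `x` that halts within time `B(k)` can be converted into a
two-part description based on a model of complexity at most `k + O(log n)`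
with essentially the same total length. -/
theorem stmt2 (D : BStr →. BStr) (hD : OptimalDM D) (T : TimedDM D)
    (enc : Finset BStr → BStr) (henc : SetEncoding enc) :
    ∃ c : ℕ, 0 < c ∧ ∀ n : ℕ, ∀ x : BStr, x.length = n → ∀ k : ℕ,
      (c : ℝ) * Real.logb 2 ((n : ℝ) + 2) ≤ (k : ℝ) → k ≤ n →
      ∃ S : Finset BStr, x ∈ S ∧
        (C D (enc S) : ℝ) ≤ (k : ℝ) + (c : ℝ) * Real.logb 2 ((n : ℝ) + 2) ∧
        ∀ p : BStr, T.ev (B D k) p = some x →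
          (C D (enc S) : ℝ) + Real.logb 2 (S.card : ℝ)
            ≤ (p.length : ℝ) + (c : ℝ) * Real.logb 2 ((n : ℝ) + 2) := by
  obtain ⟨c, hc0, hc⟩ := KProof.main_nat D hD T enc henc
  refine ⟨c, hc0, fun n x hxn k hk _ => ?_⟩
  have hw1 : 1 ≤ Nat.log 2 (n + 2) := Nat.log_pos (by norm_num) (by omega)
  have hw2 : n + 2 < 2 ^ (Nat.log 2 (n + 2) + 1) := Nat.lt_pow_succ_log_self (by norm_num) _
  have hw3 : (Nat.log 2 (n + 2) : ℝ) ≤ Real.logb 2 ((n : ℝ) + 2) := by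
    have := Real.natLog_le_logb (n + 2) 2
    push_cast at this
    exact this
  generalize Nat.log 2 (n + 2) = w at hw1 hw2 hw3
  generalize Real.logb 2 ((n : ℝ) + 2) = g at hk hw3 ⊢
  have hw1' : (1 : ℝ) ≤ w := by exact_mod_cast hw1
  have hcn : (0 : ℝ) ≤ c := Nat.cast_nonneg c
  have hck : c ≤ k := by
    have : (c : ℝ) ≤ k := by nlinarith
    exact_mod_cast this
  have hcw : (c : ℝ) * w ≤ c * g := mul_le_mul_of_nonneg_left hw3 hcn
  obtain ⟨S, s, hxS, hS, h1, h2⟩ := hc n x hxn k w hw1 hw2 hck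
  refine ⟨S, hxS, ?_, fun p hp => ?_⟩
  · have : (C D (enc S) : ℝ) ≤ k + c * w := by exact_mod_cast h1
    linarith
  · have h3 : (C D (enc S) : ℝ) + s ≤ p.length + c * w := by exact_mod_cast h2 p hp
    have hpos : (0 : ℝ) < S.card := by
      exact_mod_cast Finset.card_pos.2 ⟨x, hxS⟩
    have h4 : Real.logb 2 (S.card : ℝ) ≤ s := by
      rw [Real.logb_le_iff_le_rpow (by norm_num) hpos, Real.rpow_natCast]
      exact_mod_cast hS
    linarith
end

section
/- There exists a constant c such that for every natural number n, every binary string x of length at most n, and every finite nonempty set S of binary strings with x ∈ S, C(S) ≤ n, and |S| ≤ 2^n, one has |δ(x|S) − d(x|S) − C(S|x)| ≤ c·log(n+2); in particular, the optimality deficiency exceeds the randomness deficiency by C(S|x), up to O(log n). -/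
open scoped Classical

open Encodable

/-- the number of elements of the predicate below a given stage -/
def cnt (P : ℕ → Bool) (s : ℕ) : ℕ := Nat.rec 0 (fun s' c => bif P s' then c + 1 else c) s

theorem cnt_eq (P : ℕ → Bool) (s : ℕ) : cnt P s = Nat.count (fun s => P s = true) s := by
  induction s with
  | zero => simp [cnt]
  | succ s ih =>
    rw [Nat.count_succ, ← ih]
    change (bif P s then cnt P s + 1 else cnt P s) = _
    cases P s <;> simp

theorem cnt_computable {α : Type*} [Primcodable α] {P : α → ℕ → Bool} (hP : Computable₂ P) :
    Computable₂ (fun a s => cnt (P a) s) := by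
  unfold Computable₂ cnt
  refine Computable.nat_rec (f := fun p : α × ℕ => p.2) (g := fun _ => 0)
    (h := fun p q => bif P p.1 q.1 then q.2 + 1 else q.2) Computable.snd (Computable.const 0) ?_
  refine Computable.cond ?_ ?_ ?_
  · exact hP.comp (Computable.fst.comp Computable.fst) (Computable.fst.comp Computable.snd)
  · exact Computable.succ.comp (Computable.snd.comp Computable.snd)
  · exact Computable.snd.comp Computable.snd

/-- the `i`-th element of `P` -/
def ith (P : ℕ → Bool) (i : ℕ) : Part ℕ :=
  Nat.rfind (fun s => Part.some (P s && decide (cnt P s = i)))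

theorem ith_partrec {α : Type*} [Primcodable α] {P : α → ℕ → Bool} (hP : Computable₂ P) :
    Partrec₂ (fun a i => ith (P a) i) := by
  unfold ith
  refine Partrec.rfind (p := fun (q : α × ℕ) (s : ℕ) =>
    Part.some (P q.1 s && decide (cnt (P q.1) s = q.2))) ?_
  refine Computable.partrec (f := fun r : (α × ℕ) × ℕ =>
    (P r.1.1 r.2 && decide (cnt (P r.1.1) r.2 = r.1.2))) ?_
  refine Primrec.and.to_comp.comp ?_ ?_
  · exact hP.comp (Computable.fst.comp Computable.fst) Computable.snd
  · exact (Primrec.eq (α := ℕ)).decide.to_comp.comp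
      ((cnt_computable hP).comp (Computable.fst.comp Computable.fst) Computable.snd)
      (Computable.snd.comp Computable.fst)

theorem mem_ith {P : ℕ → Bool} {s : ℕ} (h : P s = true) : s ∈ ith P (cnt P s) := by
  refine Nat.mem_rfind.2 ⟨by simp [h], fun {m} hm => ?_⟩
  simp only [Part.mem_some_iff]
  cases hPm : P m
  · simp
  · have : cnt P m < cnt P s := by
      rw [cnt_eq, cnt_eq]; exact Nat.count_strict_mono hPm hm
    simp [this.ne]

theorem cnt_lt {P : ℕ → Bool} {s : ℕ} (h : P s = true) (A : Finset ℕ)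
    (hA : ∀ s, P s = true → s ∈ A) : cnt P s < (A.filter (fun s => P s = true)).card := by
  rw [cnt_eq, Nat.count_eq_card_filter_range]
  apply Finset.card_lt_card
  rw [Finset.ssubset_iff_of_subset]
  · exact ⟨s, by simp [h, hA s h], by simp⟩
  · intro t ht
    simp at ht ⊢
    exact ⟨hA t ht.2, ht.2⟩

theorem exists_timed {α σ : Type*} [Primcodable α] [Primcodable σ] {F : α →. σ} (hF : Partrec F) :
    ∃ ev : ℕ → α → Option σ, Computable₂ ev ∧ (∀ a, ev 0 a = none) ∧
      (∀ t t' a y, t ≤ t' → ev t a = some y → ev t' a = some y) ∧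
      (∀ a y, y ∈ F a ↔ ∃ t, ev t a = some y) := by
  obtain ⟨c, hc⟩ := Nat.Partrec.Code.exists_code.1 hF
  have hc' : ∀ a, Nat.Partrec.Code.eval c (encode a) = (F a).map encode := by
    intro a
    rw [hc]; simp
  refine ⟨fun t a => (Nat.Partrec.Code.evaln t c (encode a)).bind (fun n => (decode n : Option σ)),
    ?_, ?_, ?_, ?_⟩
  · refine Computable.option_bind ?_ ?_
    · exact Nat.Partrec.Code.primrec_evaln.to_comp.comp
        ((Computable.fst.pair (Computable.const c)).pair (Computable.encode.comp Computable.snd))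
    · exact Computable.decode.comp Computable.snd
  · intro a
    simp [Nat.Partrec.Code.evaln]
  · intro t t' a y h h1
    simp only [Option.bind_eq_some_iff] at h1 ⊢
    obtain ⟨n, h1, h2⟩ := h1
    exact ⟨n, Nat.Partrec.Code.evaln_mono h h1, h2⟩
  · intro a y
    constructor
    · intro h
      have : encode y ∈ Nat.Partrec.Code.eval c (encode a) := by
        rw [hc']; exact Part.mem_map _ h
      obtain ⟨t, ht⟩ := Nat.Partrec.Code.evaln_complete.1 this
      refine ⟨t, ?_⟩
      simp only [Option.bind_eq_some_iff]
      exact ⟨_, ht, encodek y⟩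
    · rintro ⟨t, ht⟩
      simp only [Option.bind_eq_some_iff] at ht
      obtain ⟨n, h1, h2⟩ := ht
      have := Nat.Partrec.Code.evaln_sound h1
      rw [hc'] at this
      obtain ⟨z, hz, rfl⟩ := (Part.mem_map_iff _).1 this
      rw [encodek] at h2
      cases h2
      exact hz

/-- bits to number -/
def unbits (l : BStr) : ℕ := l.foldr (fun b n => cond b (2 * n + 1) (2 * n)) 0

theorem unbits_primrec : Primrec unbits := by
  unfold unbits
  refine Primrec.list_foldr (h := fun (_ : BStr) (q : Bool × ℕ) => cond q.1 (2 * q.2 + 1) (2 * q.2))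
    Primrec.id (Primrec.const 0) ?_
  refine Primrec.cond (Primrec.fst.comp Primrec.snd) ?_ ?_
  · exact Primrec.nat_double_succ.comp (Primrec.snd.comp Primrec.snd)
  · exact Primrec.nat_double.comp (Primrec.snd.comp Primrec.snd)

theorem unbits_bits (n : ℕ) : unbits n.bits = n := by
  induction n using Nat.binaryRec' with
  | zero => simp [unbits]
  | bit b n h ih =>
    rw [Nat.bits_append_bit n b h]
    change cond b (2 * unbits n.bits + 1) (2 * unbits n.bits) = _
    rw [ih]
    cases b <;> simp [Nat.bit]

/-- parse a description into a parameter and an index -/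
def parse (α : Type*) [Primcodable α] (p : BStr) : Option (α × ℕ) :=
  (decode (unbits ((p.drop ((p.takeWhile id).length + 1)).take (p.takeWhile id).length)) :
    Option α).map (fun a => (a,
      unbits ((p.drop ((p.takeWhile id).length + 1)).drop (p.takeWhile id).length)))

theorem parse_computable (α : Type*) [Primcodable α] : Computable (parse α) := by
  have hu : Primrec (fun p : BStr => (p.takeWhile id).length) :=
    Primrec.list_length.comp (Primrec.list_takeWhile Primrec.id)
  have hd : Primrec (fun p : BStr => p.drop ((p.takeWhile id).length + 1)) :=
    Primrec.list_drop.comp (Primrec.succ.comp hu) Primrec.id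
  refine Primrec.to_comp ?_
  unfold parse
  refine Primrec.option_map ?_ ?_
  · exact Primrec.decode.comp (unbits_primrec.comp (Primrec.list_take.comp hu hd))
  · exact Primrec.snd.pair ((unbits_primrec.comp (Primrec.list_drop.comp hu hd)).comp Primrec.fst)

theorem exists_parse {α : Type*} [Primcodable α] (a : α) (i : ℕ) :
    ∃ p : BStr, parse α p = some (a, i) ∧
      p.length = i.size + 2 * (encode a).size + 1 := by
  refine ⟨List.replicate (encode a).size true ++ false :: ((encode a).bits ++ i.bits), ?_, ?_⟩
  · have h : ((List.replicate (encode a).size true ++ false :: ((encode a).bits ++ i.bits)).takeWhile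
        id).length = (encode a).size := by
      rw [List.takeWhile_append_of_pos] <;> simp
    unfold parse
    rw [h]
    have h2 : (List.replicate (encode a).size true ++ false :: ((encode a).bits ++ i.bits)).drop
        ((encode a).size + 1) = (encode a).bits ++ i.bits := by
      rw [List.drop_append]; simp
    rw [h2, ← Nat.size_eq_bits_len, List.take_left, List.drop_left, unbits_bits, unbits_bits]
    simp
  · simp [Nat.size_eq_bits_len]; ring

theorem Cw_le_of_mem {D : BStr →. BStr} {x p : BStr} (h : x ∈ D p) : Cw D x ≤ p.length :=
  iInf₂_le p h

theorem CwCond_le_of_mem {E : BStr → BStr →. BStr} {x y p : BStr} (h : x ∈ E p y) :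
    CwCond E x y ≤ p.length :=
  iInf₂_le p h

theorem exists_Cw {D : BStr →. BStr} {x : BStr} (h : Cw D x ≠ ⊤) :
    ∃ p, x ∈ D p ∧ p.length = C D x := by
  by_contra! hc
  have h1 : ((C D x : ℕ) : ℕ∞) = Cw D x := ENat.natCast_toNat h
  have h2 : ((C D x + 1 : ℕ) : ℕ∞) ≤ Cw D x := by
    refine le_iInf₂ fun p hp => ?_
    have h3 := Cw_le_of_mem hp
    rw [← h1] at h3
    have h4 := hc p hp
    norm_cast at h3 ⊢
    omega
  rw [← h1] at h2
  norm_cast at h2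
  omega

theorem exists_CwCond {E : BStr → BStr →. BStr} {x y : BStr} (h : CwCond E x y ≠ ⊤) :
    ∃ p, x ∈ E p y ∧ p.length = Ccond E x y :=
  exists_Cw (D := fun p => E p y) h

theorem C_le_of_mem {D : BStr →. BStr} (hD : OptimalDM D) {D' : BStr →. BStr} (hD' : Partrec D') :
    ∃ c : ℕ, ∀ x p, x ∈ D' p → Cw D x ≠ ⊤ ∧ C D x ≤ p.length + c := by
  obtain ⟨c, hc⟩ := hD.2 D' hD'
  refine ⟨c, fun x p hp => ?_⟩
  have h : Cw D x ≤ ((p.length + c : ℕ) : ℕ∞) := by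
    push_cast
    exact (hc x).trans (add_le_add_left (Cw_le_of_mem hp) _)
  exact ⟨ne_top_of_le_ne_top (ENat.natCast_ne_top _) h, ENat.toNat_le_of_le_natCast h⟩

theorem Ccond_le_of_mem {E : BStr → BStr →. BStr} (hE : OptimalCDM E)
    {E' : BStr → BStr →. BStr} (hE' : Partrec₂ E') :
    ∃ c : ℕ, ∀ x y p, x ∈ E' p y → CwCond E x y ≠ ⊤ ∧ Ccond E x y ≤ p.length + c := by
  obtain ⟨c, hc⟩ := hE.2 E' hE'
  refine ⟨c, fun x y p hp => ?_⟩
  have h : CwCond E x y ≤ ((p.length + c : ℕ) : ℕ∞) := by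
    push_cast
    exact (hc x y).trans (add_le_add_left (CwCond_le_of_mem hp) _)
  exact ⟨ne_top_of_le_ne_top (ENat.natCast_ne_top _) h, ENat.toNat_le_of_le_natCast h⟩

theorem C_le_of_index {α : Type*} [Primcodable α] {D : BStr →. BStr} (hD : OptimalDM D)
    {G : α × ℕ →. BStr} (hG : Partrec G) :
    ∃ c : ℕ, ∀ x a i, x ∈ G (a, i) → C D x ≤ i.size + 2 * (encode a).size + c := by
  obtain ⟨c, hc⟩ := C_le_of_mem hD
    (D' := fun p => (Part.ofOption (parse α p)).bind G)
    (Partrec.bind (parse_computable α).ofOption (hG.comp Computable.snd))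
  refine ⟨c + 1, fun x a i h => ?_⟩
  obtain ⟨p, hp, hl⟩ := exists_parse a i
  have := (hc x p (by rw [hp]; exact Part.mem_bind_iff.2 ⟨_, Part.mem_some _, h⟩)).2
  omega

theorem Ccond_le_of_index {α : Type*} [Primcodable α] {E : BStr → BStr →. BStr} (hE : OptimalCDM E)
    {G : (α × ℕ) × BStr →. BStr} (hG : Partrec G) :
    ∃ c : ℕ, ∀ x y a i, x ∈ G ((a, i), y) → Ccond E x y ≤ i.size + 2 * (encode a).size + c := by
  obtain ⟨c, hc⟩ := Ccond_le_of_mem hE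
    (E' := fun p y => (Part.ofOption (parse α p)).bind (fun q => G (q, y)))
    (Partrec.bind ((parse_computable α).comp Computable.fst).ofOption
      (hG.comp (Computable.snd.pair (Computable.snd.comp Computable.fst))))
  refine ⟨c + 1, fun x y a i h => ?_⟩
  obtain ⟨p, hp, hl⟩ := exists_parse a i
  have := (hc x y p (by rw [hp]; exact Part.mem_bind_iff.2 ⟨_, Part.mem_some _, h⟩)).2
  omega

/-- the program tested at stage `s` -/
def progOf (s : ℕ) : BStr := (decode s.unpair.2 : Option BStr).getD []

theorem progOf_computable : Computable progOf :=
  Computable.option_getD (Computable.decode.comp (Computable.snd.comp Computable.unpair))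
    (Computable.const [])

/-- the output discovered at stage `s` -/
def hit (ev : ℕ → ℕ × BStr → Option BStr) (q : ℕ × ℕ) (s : ℕ) : Option BStr :=
  bif (decide (encode (progOf s) = s.unpair.2) &&
      (decide ((progOf s).length = q.2) && !(ev s.unpair.1 (q.1, progOf s)).isSome))
  then ev (s.unpair.1 + 1) (q.1, progOf s) else none

theorem hit_computable {ev : ℕ → ℕ × BStr → Option BStr} (hev : Computable₂ ev) :
    Computable₂ (hit ev) := by
  have hp : Computable (fun r : (ℕ × ℕ) × ℕ => progOf r.2) := progOf_computable.comp Computable.snd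
  have ht : Computable (fun r : (ℕ × ℕ) × ℕ => r.2.unpair.1) :=
    Computable.fst.comp (Computable.unpair.comp Computable.snd)
  have ht2 : Computable (fun r : (ℕ × ℕ) × ℕ => r.2.unpair.2) :=
    Computable.snd.comp (Computable.unpair.comp Computable.snd)
  have hk : Computable (fun r : (ℕ × ℕ) × ℕ => (r.1.1, progOf r.2)) :=
    (Computable.fst.comp Computable.fst).pair hp
  have heq := (Primrec.eq (α := ℕ)).decide.to_comp
  refine Computable.cond ?_ ?_ ?_
  · refine Primrec.and.to_comp.comp ?_ (Primrec.and.to_comp.comp ?_ ?_)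
    · exact heq.comp (Computable.encode.comp hp) ht2
    · exact heq.comp (Computable.list_length.comp hp) (Computable.snd.comp Computable.fst)
    · exact Primrec.not.to_comp.comp (Primrec.option_isSome.to_comp.comp (hev.comp ht hk))
  · exact hev.comp (Computable.succ.comp ht) hk
  · exact Computable.const none

theorem hit_eq_some {ev : ℕ → ℕ × BStr → Option BStr} {q : ℕ × ℕ} {s : ℕ} {x : BStr} :
    hit ev q s = some x ↔ encode (progOf s) = s.unpair.2 ∧ (progOf s).length = q.2 ∧
      ev s.unpair.1 (q.1, progOf s) = none ∧ ev (s.unpair.1 + 1) (q.1, progOf s) = some x := by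
  unfold hit
  rw [Bool.cond_eq_ite]
  simp [and_assoc]

theorem exists_hit {F : ℕ × BStr →. BStr} {ev : ℕ → ℕ × BStr → Option BStr}
    (h0 : ∀ a, ev 0 a = none)
    (hspec : ∀ a y, y ∈ F a ↔ ∃ t, ev t a = some y) {k : ℕ} {r x : BStr} (hx : x ∈ F (k, r)) :
    ∃ s, hit ev (k, r.length) s = some x ∧ progOf s = r := by
  have hex := (hspec _ _).1 hx
  have h1 := Nat.find_spec hex
  have h2 : Nat.find hex ≠ 0 := by
    intro h
    rw [h, h0] at h1
    simp at h1
  obtain ⟨t, ht⟩ := Nat.exists_eq_succ_of_ne_zero h2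
  have h3 : ev t (k, r) ≠ some x := Nat.find_min hex (by omega)
  rw [ht] at h1
  have hp : progOf (Nat.pair t (encode r)) = r := by simp [progOf]
  refine ⟨Nat.pair t (encode r), ?_, hp⟩
  rw [hit_eq_some, hp]
  simp only [Nat.unpair_pair]
  refine ⟨trivial, trivial, ?_, h1⟩
  cases h : ev t (k, r) with
  | none => rfl
  | some z =>
    have hz : z ∈ F (k, r) := (hspec _ _).2 ⟨t, h⟩
    rw [Part.mem_unique hz hx] at h
    exact absurd h h3

theorem hit_finset {ev : ℕ → ℕ × BStr → Option BStr}
    (hmono : ∀ t t' a y, t ≤ t' → ev t a = some y → ev t' a = some y) (k m : ℕ) :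
    ∃ A : Finset ℕ, (∀ s, s ∈ A ↔ ∃ x, hit ev (k, m) s = some x) ∧ A.card ≤ 2 ^ m := by
  let V : Finset BStr := (Finset.univ : Finset (List.Vector Bool m)).image List.Vector.toList
  have hV : V.card ≤ 2 ^ m := by
    refine Finset.card_image_le.trans ?_
    simp
  have hmem : ∀ s x, hit ev (k, m) s = some x → progOf s ∈ V := by
    intro s x h
    rw [hit_eq_some] at h
    exact Finset.mem_image.2 ⟨⟨progOf s, h.2.1⟩, Finset.mem_univ _, rfl⟩
  have hinj : Set.InjOn progOf {s | ∃ x, hit ev (k, m) s = some x} := by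
    rintro s ⟨x, hx⟩ s' ⟨x', hx'⟩ h
    rw [hit_eq_some] at hx hx'
    rw [← h] at hx'
    have e2 : s.unpair.2 = s'.unpair.2 := hx.1.symm.trans hx'.1
    have e1 : s.unpair.1 = s'.unpair.1 := by
      rcases lt_trichotomy s.unpair.1 s'.unpair.1 with hl | hl | hl
      · have := hmono _ _ _ _ (Nat.succ_le_of_lt hl) hx.2.2.2
        rw [hx'.2.2.1] at this
        cases this
      · exact hl
      · have := hmono _ _ _ _ (Nat.succ_le_of_lt hl) hx'.2.2.2
        rw [hx.2.2.1] at this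
        cases this
    rw [← Nat.pair_unpair s, ← Nat.pair_unpair s', e1, e2]
  have hfin : {s | ∃ x, hit ev (k, m) s = some x}.Finite := by
    refine Set.Finite.of_finite_image (f := progOf) (V.finite_toSet.subset ?_) hinj
    rintro _ ⟨s, ⟨x, hx⟩, rfl⟩
    exact hmem s x hx
  refine ⟨hfin.toFinset, by simp, le_trans ?_ hV⟩
  refine Finset.card_le_card_of_injOn progOf ?_ ?_
  · intro s hs
    simp at hs
    obtain ⟨x, hx⟩ := hs
    exact hmem s x hx
  · simpa using hinj

/-- stage `s` outputs `x` -/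
def isHit (h : ℕ → Option BStr) (x : BStr) (s : ℕ) : Bool := decide (h s = some x)

/-- stage `s` outputs something for the `2^j`-th time -/
def isHit2 (h : ℕ → Option BStr) (j : ℕ) (s : ℕ) : Bool :=
  Option.casesOn (h s) false (fun x => decide (cnt (isHit h x) s + 1 = 2 ^ j))

theorem isHit2_iff {h : ℕ → Option BStr} {j s : ℕ} :
    isHit2 h j s = true ↔ ∃ x, h s = some x ∧ cnt (isHit h x) s + 1 = 2 ^ j := by
  unfold isHit2
  cases h s <;> simp

theorem isHit_computable {ev : ℕ → ℕ × BStr → Option BStr} (hev : Computable₂ ev) :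
    Computable₂ (fun (q : (ℕ × ℕ) × BStr) (s : ℕ) => isHit (hit ev q.1) q.2 s) := by
  refine (Primrec.eq (α := Option BStr)).decide.to_comp.comp ?_ ?_
  · exact (hit_computable hev).comp (Computable.fst.comp Computable.fst) Computable.snd
  · exact Computable.option_some.comp (Computable.snd.comp Computable.fst)

theorem pow_computable : Computable (fun j : ℕ => 2 ^ j) := by
  refine (Computable.nat_rec (f := fun j : ℕ => j) (g := fun _ => 1)
    (h := fun _ q => 2 * q.2) Computable.id (Computable.const 1)
    (Primrec.nat_double.to_comp.comp (Computable.snd.comp Computable.snd))).of_eq ?_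
  intro j
  induction j with
  | zero => rfl
  | succ j ih => rw [pow_succ, ← ih, mul_comm]

theorem cntHit_computable {ev : ℕ → ℕ × BStr → Option BStr} (hev : Computable₂ ev) :
    Computable (fun q : ((ℕ × ℕ) × BStr) × ℕ => cnt (isHit (hit ev q.1.1) q.1.2) q.2) := by
  have h1 := cnt_computable (isHit_computable hev)
  exact h1

theorem isHit2_computable {ev : ℕ → ℕ × BStr → Option BStr} (hev : Computable₂ ev) :
    Computable₂ (fun (a : (ℕ × ℕ) × ℕ) (s : ℕ) => isHit2 (hit ev a.1) a.2 s) := by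
  refine Computable.option_casesOn ?_ (Computable.const false) ?_
  · exact (hit_computable hev).comp (Computable.fst.comp Computable.fst) Computable.snd
  · refine (Primrec.eq (α := ℕ)).decide.to_comp.comp (Computable.succ.comp ?_) ?_
    · have h2 : Computable (fun r : (((ℕ × ℕ) × ℕ) × ℕ) × BStr => (((r.1.1.1, r.2), r.1.2) :
          ((ℕ × ℕ) × BStr) × ℕ)) :=
        ((Computable.fst.comp (Computable.fst.comp Computable.fst)).pair Computable.snd).pair
          (Computable.snd.comp Computable.fst)
      have h3 := (cntHit_computable hev).comp h2
      exact h3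
    · exact pow_computable.comp (Computable.snd.comp (Computable.fst.comp Computable.fst))
theorem isHit2_card {h : ℕ → Option BStr} {A : Finset ℕ} (hA : ∀ s, s ∈ A ↔ ∃ x, h s = some x)
    (j : ℕ) : 2 ^ j * (A.filter (fun s => isHit2 h j s = true)).card ≤ A.card := by
  set T := A.filter (fun s => isHit2 h j s = true) with hT
  have hTm : ∀ s ∈ T, ∃ x, h s = some x ∧ cnt (isHit h x) s + 1 = 2 ^ j := by
    intro s hs
    exact isHit2_iff.1 (Finset.mem_filter.1 hs).2
  have hinj : Set.InjOn h T := by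
    have key : ∀ s ∈ T, ∀ s' ∈ T, h s = h s' → ¬ s < s' := by
      intro s hs s' hs' he hlt
      obtain ⟨x, hx, h1⟩ := hTm s hs
      obtain ⟨x', hx', h1'⟩ := hTm s' hs'
      have : x = x' := by rw [hx, hx'] at he; exact Option.some.inj he
      subst this
      have : cnt (isHit h x) s < cnt (isHit h x) s' := by
        rw [cnt_eq, cnt_eq]
        exact Nat.count_strict_mono (by simp [isHit, hx]) hlt
      omega
    intro s hs s' hs' he
    rcases lt_trichotomy s s' with hl | hl | hl
    · exact absurd hl (key s hs s' hs' he)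
    · exact hl
    · exact absurd hl (key s' hs' s hs he.symm)
  rw [← Finset.card_image_of_injOn hinj, mul_comm]
  have hsum : ∑ o ∈ T.image h, (A.filter (fun s => h s = o)).card ≤ A.card := by
    rw [← Finset.card_biUnion]
    · exact Finset.card_le_card (Finset.biUnion_subset.2 fun o _ => Finset.filter_subset _ _)
    · intro o _ o' _ hne
      refine Finset.disjoint_left.2 fun s hs hs' => hne ?_
      rw [← (Finset.mem_filter.1 hs).2, ← (Finset.mem_filter.1 hs').2]
  refine le_trans ?_ hsum
  rw [← smul_eq_mul]
  refine Finset.card_nsmul_le_sum _ _ _ fun o ho => ?_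
  obtain ⟨s, hs, rfl⟩ := Finset.mem_image.1 ho
  obtain ⟨x, hx, h1⟩ := hTm s hs
  have hlt := cnt_lt (P := isHit h x) (s := s) (by simp [isHit, hx]) A (by
    intro t ht
    exact (hA t).2 ⟨x, by simpa [isHit] using ht⟩)
  have : (A.filter (fun s => isHit h x s = true)) = A.filter (fun t => h t = h s) := by
    ext t
    simp [isHit, hx]
  rw [this] at hlt
  omega

theorem exists_isHit2 {h : ℕ → Option BStr} {A : Finset ℕ} (hA : ∀ s, s ∈ A ↔ ∃ x, h s = some x)
    {x : BStr} {j : ℕ} (hj : 2 ^ j ≤ (A.filter (fun s => h s = some x)).card) :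
    ∃ s, h s = some x ∧ isHit2 h j s = true := by
  have hset : {s | isHit h x s = true} = ((A.filter (fun s => h s = some x) : Finset ℕ) : Set ℕ) := by
    ext s
    simp [isHit]
    intro hs
    exact (hA s).2 ⟨x, hs⟩
  have hpos : 0 < 2 ^ j := by positivity
  have hlt : ∀ hf : (Set.ofPred (fun s => isHit h x s = true)).Finite, 2 ^ j - 1 < hf.toFinset.card := by
    intro hf
    have : hf.toFinset = A.filter (fun s => h s = some x) := by
      ext s
      rw [Set.Finite.mem_toFinset]
      rw [hset]; rfl
    rw [this]; omega
  have h1 := Nat.nth_mem _ hlt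
  have h2 := Nat.count_nth hlt
  rw [← cnt_eq] at h2
  refine ⟨Nat.nth (fun s => isHit h x s = true) (2 ^ j - 1), by simpa [isHit] using h1, ?_⟩
  rw [isHit2_iff]
  exact ⟨x, by simpa [isHit] using h1, by omega⟩

theorem size_pair_le {a b n : ℕ} (ha : a.size ≤ n) (hb : b.size ≤ n) :
    (Nat.pair a b).size ≤ 2 * n := by
  rw [Nat.size_le] at *
  calc Nat.pair a b < (max a b + 1) ^ 2 := Nat.pair_lt_max_add_one_sq a b
    _ ≤ (2 ^ n) ^ 2 := Nat.pow_le_pow_left (by omega) 2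
    _ = 2 ^ (2 * n) := by rw [← pow_mul, mul_comm]

/-- Hard half of the symmetry of information. -/
theorem symm_half {D : BStr →. BStr} (hD : OptimalDM D)
    {E : BStr → BStr →. BStr} (hE : OptimalCDM E) :
    ∃ c : ℕ, ∀ x y : BStr, Cw D y ≠ ⊤ → CwCond E x y ≠ ⊤ →
      C D x + Ccond E y x ≤ C D y + Ccond E x y + 16 * (C D y + Ccond E x y).size + c := by
  let F : ℕ × BStr →. BStr := fun q => (D (q.2.take q.1)).bind (fun y => E (q.2.drop q.1) y)
  have hF : Partrec F := by
    refine Partrec.bind (hD.1.comp (Primrec.list_take.to_comp.comp Computable.fst Computable.snd)) ?_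
    exact hE.1.comp (Primrec.list_drop.to_comp.comp (Computable.fst.comp Computable.fst)
      (Computable.snd.comp Computable.fst)) Computable.snd
  obtain ⟨ev, hev, h0, hmono, hspec⟩ := exists_timed hF
  -- description of `x`
  let G₂ : ((ℕ × ℕ) × ℕ) × ℕ →. BStr := fun a =>
    (ith (isHit2 (hit ev a.1.1) a.1.2) a.2).bind (fun s => Part.ofOption (hit ev a.1.1 s))
  have hG₂ : Partrec G₂ := by
    refine Partrec.bind ?_ ?_
    · exact ith_partrec (isHit2_computable hev)
    · exact ((hit_computable hev).comp
        (Computable.fst.comp (Computable.fst.comp Computable.fst)) Computable.snd).ofOption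
  -- description of `y` given `x`
  let G₁ : ((ℕ × ℕ) × ℕ) × BStr →. BStr := fun a =>
    (ith (isHit (hit ev a.1.1) a.2) a.1.2).bind (fun s => D ((progOf s).take a.1.1.1))
  have hG₁ : Partrec G₁ := by
    refine Partrec.bind ?_ ?_
    · have h1 := ith_partrec (isHit_computable hev)
      have h2 : Computable (fun r : ((ℕ × ℕ) × ℕ) × BStr => (((r.1.1, r.2), r.1.2) :
          ((ℕ × ℕ) × BStr) × ℕ)) :=
        ((Computable.fst.comp Computable.fst).pair Computable.snd).pair
          (Computable.snd.comp Computable.fst)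
      have h3 := Partrec.comp h1 h2
      exact h3
    · exact hD.1.comp (Primrec.list_take.to_comp.comp
        (Computable.fst.comp (Computable.fst.comp (Computable.fst.comp Computable.fst)))
        (progOf_computable.comp Computable.snd))
  obtain ⟨c₂, hc₂⟩ := C_le_of_index hD hG₂
  obtain ⟨c₁, hc₁⟩ := Ccond_le_of_index hE hG₁
  refine ⟨c₁ + c₂ + 1, fun x y hy hxy => ?_⟩
  obtain ⟨p, hp, hpl⟩ := exists_Cw hy
  obtain ⟨q, hq, hql⟩ := exists_CwCond hxy
  set k := C D y
  set l := Ccond E x y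
  have hxF : x ∈ F (k, p ++ q) := by
    refine Part.mem_bind_iff.2 ⟨y, ?_, ?_⟩
    · rw [← hpl]; simpa using hp
    · rw [← hpl]; simpa using hq
  obtain ⟨s₀, hs₀, hps₀⟩ := exists_hit h0 hspec hxF
  have hlen : (p ++ q).length = k + l := by simp [hpl, hql]
  rw [hlen] at hs₀
  obtain ⟨A, hA, hAc⟩ := hit_finset hmono k (k + l)
  set N := (A.filter (fun s => hit ev (k, k + l) s = some x)).card with hN
  have hNpos : N ≠ 0 := by
    rw [hN, Finset.card_ne_zero]
    exact ⟨s₀, Finset.mem_filter.2 ⟨(hA s₀).2 ⟨x, hs₀⟩, hs₀⟩⟩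
  set j := Nat.log 2 N
  have hj1 : 2 ^ j ≤ N := Nat.pow_log_le_self 2 hNpos
  have hj2 : N < 2 ^ (j + 1) := Nat.lt_pow_succ_log_self (by norm_num) N
  have hNle : N ≤ 2 ^ (k + l) := (Finset.card_filter_le _ _).trans hAc
  have hjm : j ≤ k + l := (Nat.pow_le_pow_iff_right (by norm_num)).1 (hj1.trans hNle)
  -- bound for `y` given `x`
  have b1 : Ccond E y x ≤ (j + 1) + 2 * (encode (k, k + l)).size + c₁ := by
    have hit0 : isHit (hit ev (k, k + l)) x s₀ = true := by simp [isHit, hs₀]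
    have hmem := hc₁ y x (k, k + l) (cnt (isHit (hit ev (k, k + l)) x) s₀)
      (Part.mem_bind_iff.2 ⟨s₀, mem_ith hit0, by
        simp only [hps₀]; rw [← hpl]; simpa using hp⟩)
    have hlt := cnt_lt hit0 A (fun s hs => (hA s).2 ⟨x, by simpa [isHit] using hs⟩)
    have hsz : (cnt (isHit (hit ev (k, k + l)) x) s₀).size ≤ j + 1 := by
      rw [Nat.size_le]
      refine hlt.trans_le (le_trans (le_of_eq ?_) hj2.le)
      simp [isHit, hN]
    omega
  have b2 : C D x ≤ (k + l - j) + 2 * (encode ((k, k + l), j)).size + c₂ := by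
    obtain ⟨s, hs, hs2⟩ := exists_isHit2 hA hj1
    have hmem := hc₂ x ((k, k + l), j) (cnt (isHit2 (hit ev (k, k + l)) j) s)
      (Part.mem_bind_iff.2 ⟨s, mem_ith hs2, by simp [hs]⟩)
    have hlt := cnt_lt hs2 A (fun s hs => by
      obtain ⟨z, hz, _⟩ := isHit2_iff.1 hs
      exact (hA s).2 ⟨z, hz⟩)
    have hcard := (isHit2_card hA j).trans hAc
    have hsz : (cnt (isHit2 (hit ev (k, k + l)) j) s).size ≤ k + l - j := by
      rw [Nat.size_le]
      refine hlt.trans_le ?_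
      refine Nat.le_of_mul_le_mul_left (hcard.trans (le_of_eq ?_)) (by positivity : 0 < 2 ^ j)
      rw [← pow_add]; congr 1; omega
    omega
  have z1 : (encode (k, k + l)).size ≤ 2 * (k + l).size :=
    size_pair_le (a := k) (b := k + l) (Nat.size_le_size (Nat.le_add_right k l)) le_rfl
  have z2 : (encode ((k, k + l), j)).size ≤ 2 * (2 * (k + l).size) :=
    size_pair_le z1 ((Nat.size_le_size hjm).trans (by omega))
  omega

theorem size_lin_le (n d : ℕ) : (2 * n + d).size ≤ (n + 2).size + d + 1 := by
  rw [Nat.size_le]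
  have h1 := Nat.lt_size_self (n + 2)
  have h2 : d < 2 ^ d := Nat.lt_two_pow_self
  have h3 : 2 ^ ((n + 2).size + d + 1) = 2 * (2 ^ (n + 2).size * 2 ^ d) := by
    rw [pow_add, pow_add]; ring
  rw [h3]
  have h4 : (n + 2) * (d + 1) ≤ 2 ^ (n + 2).size * 2 ^ d := Nat.mul_le_mul h1.le h2
  nlinarith

theorem stmt3_nat {D : BStr →. BStr} (hD : OptimalDM D)
    {E : BStr → BStr →. BStr} (hE : OptimalCDM E) :
    ∃ c : ℕ, ∀ (n : ℕ) (x y : BStr), x.length ≤ n → C D y ≤ n →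
      C D x + Ccond E y x ≤ C D y + Ccond E x y + (16 * (n + 2).size + c) ∧
      C D y + Ccond E x y ≤ C D x + Ccond E y x + (16 * (n + 2).size + c) := by
  obtain ⟨c0, h0⟩ := symm_half hD hE
  obtain ⟨c1, h1⟩ := C_le_of_mem hD (D' := fun p => Part.some p) Partrec.some
  obtain ⟨c2, h2⟩ := Ccond_le_of_mem hE (E' := fun p _ => D p) (hD.1.comp Computable.fst)
  have fin1 : ∀ x, Cw D x ≠ ⊤ := fun x => (h1 x x (Part.mem_some _)).1
  have cond : ∀ x y, CwCond E x y ≠ ⊤ ∧ Ccond E x y ≤ C D x + c2 := by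
    intro x y
    obtain ⟨p, hp, hl⟩ := exists_Cw (fin1 x)
    rw [← hl]
    exact h2 x y p hp
  refine ⟨16 * (2 * c1 + c2 + 1) + c0, fun n x y hx hy => ?_⟩
  have hCx : C D x ≤ n + c1 := (h1 x x (Part.mem_some _)).2.trans (by omega)
  have e1 := h0 x y (fin1 y) (cond x y).1
  have e2 := h0 y x (fin1 x) (cond y x).1
  have f1 := (cond x y).2
  have f2 := (cond y x).2
  have s1 : (C D y + Ccond E x y).size ≤ (n + 2).size + (2 * c1 + c2) + 1 :=
    (Nat.size_le_size (by omega)).trans (size_lin_le n (2 * c1 + c2))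
  have s2 : (C D x + Ccond E y x).size ≤ (n + 2).size + (2 * c1 + c2) + 1 :=
    (Nat.size_le_size (by omega)).trans (size_lin_le n (2 * c1 + c2))
  constructor <;> omega

theorem size_le_logb (n : ℕ) : ((n + 2).size : ℝ) ≤ 2 * Real.logb 2 ((n : ℝ) + 2) ∧
    1 ≤ Real.logb 2 ((n : ℝ) + 2) := by
  have hpos : (0 : ℝ) < (n : ℝ) + 2 := by positivity
  have h1 : 1 ≤ Real.logb 2 ((n : ℝ) + 2) := by
    rw [Real.le_logb_iff_rpow_le (by norm_num) hpos]
    simp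
  refine ⟨?_, h1⟩
  obtain ⟨t, ht⟩ : ∃ t, (n + 2).size = t + 1 :=
    Nat.exists_eq_succ_of_ne_zero (Nat.size_pos.2 (by omega)).ne'
  have h2 : 2 ^ t ≤ n + 2 := Nat.lt_size.1 (by omega)
  have h3 : (t : ℝ) ≤ Real.logb 2 ((n : ℝ) + 2) := by
    rw [Real.le_logb_iff_rpow_le (by norm_num) hpos, Real.rpow_natCast]
    exact_mod_cast h2
  rw [ht]; push_cast; linarith

/-- The optimality deficiency exceeds the randomness deficiency by `C(S|x)`,
up to `O(log n)`. -/
theorem stmt3 (D : BStr →. BStr) (hD : OptimalDM D)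
    (E : BStr → BStr →. BStr) (hE : OptimalCDM E)
    (enc : Finset BStr → BStr) (henc : SetEncoding enc) :
    ∃ c : ℝ, ∀ n : ℕ, ∀ x : BStr, x.length ≤ n →
      ∀ S : Finset BStr, x ∈ S → C D (enc S) ≤ n → S.card ≤ 2 ^ n →
      |(((C D (enc S) : ℝ) + Real.logb 2 (S.card : ℝ) - (C D x : ℝ))
          - (Real.logb 2 (S.card : ℝ) - (Ccond E x (enc S) : ℝ))
          - (Ccond E (enc S) x : ℝ))|
        ≤ c * Real.logb 2 ((n : ℝ) + 2) := by
  obtain ⟨c, hc⟩ := stmt3_nat hD hE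
  refine ⟨32 + c, fun n x hx S _ hS _ => ?_⟩
  obtain ⟨h1, h2⟩ := hc n x (enc S) hx hS
  obtain ⟨h3, h4⟩ := size_le_logb n
  have h1' : (C D x : ℝ) + Ccond E (enc S) x ≤
      C D (enc S) + Ccond E x (enc S) + (16 * (n + 2).size + c) := by exact_mod_cast h1
  have h2' : (C D (enc S) : ℝ) + Ccond E x (enc S) ≤
      C D x + Ccond E (enc S) x + (16 * (n + 2).size + c) := by exact_mod_cast h2
  have h5 : (c : ℝ) ≤ c * Real.logb 2 ((n : ℝ) + 2) := le_mul_of_one_le_right (by positivity) h4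
  rw [abs_le]
  constructor <;> linarith
end
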